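/- For every sentence C, the colored ribbon function expands positively into the colored immaculate basis as R_C = Σ_J L_{J,C} 𝔖_J, where the sum runs over all sentences J with |J| = |C| and L_{J,C} is the number of standard colored immaculate tableaux of shape J with colored descent composition C. -/

import Mathlib

open scoped BigOperators

namespace ColoredImm

variable {A : Type*}

/-- A *weak sentence* over the alphabet `A`: a finite list of words (words may be empty). -/
abbrev Sentence (A : Type*) := List (List A)

/-- A genuine *sentence*: all of its words are nonempty. -/
def IsSentence (I : Sentence A) : Prop := ∀ w ∈ I, w ≠ []

/-- The size `|I|` of a sentence: its total number of letters. -/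
def size (I : Sentence A) : ℕ := (I.map List.length).sum

/-- The word lengths `wℓ(I)` of a sentence. -/
def wl (I : Sentence A) : List ℕ := I.map List.length

/-- The flattening of a weak sentence: delete all empty words. -/
def flattenWS (I : Sentence A) : Sentence A := I.filter (fun w => !w.isEmpty)

/-- `Refines J I` means `J ⪯ I`: the sentence `I` can be obtained by concatenating
some adjacent words of `J` (so `J` is a refinement of `I`, and `I` a coarsening of `J`). -/
def Refines (J I : Sentence A) : Prop :=
  ∃ P : List (Sentence A), (∀ p ∈ P, p ≠ []) ∧ P.flatten = J ∧ P.map List.flatten = I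

/-! ### Fillings and colored immaculate tableaux -/

/-- An integer filling of a diagram, recorded row by row. -/
abbrev Filling := List (List ℕ)

/-- The entry of a filling at box `b = (row, column)` (0-indexed), with default `0`. -/
def entryAt (f : Filling) (b : ℕ × ℕ) : ℕ := (f.getD b.1 []).getD b.2 0

/-- `IsCIT I f`: `f` is a colored immaculate tableau of shape `I`; that is, `f` has the
same shape as the colored composition diagram of `I`, its entries are positive integers
weakly increasing left to right along each row, and the entries in the first column are
strictly increasing from top to bottom. -/
def IsCIT (I : Sentence A) (f : Filling) : Prop :=
  f.map List.length = I.map List.length ∧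
  (∀ row ∈ f, row.Chain' (· ≤ ·)) ∧
  (f.filterMap List.head?).Chain' (· < ·) ∧
  (∀ x ∈ f.flatten, 1 ≤ x)

/-- The colors (letters of `w`) of the boxes of one row whose entry (in `row`) is `v`,
read from left to right. -/
def rowWith (w : List A) (row : List ℕ) (v : ℕ) : List A :=
  ((w.zip row).filter (fun p => p.2 == v)).map Prod.fst

/-- The word of the type of a tableau at value `v`: the colors of all boxes with entry `v`,
read left to right, from the bottom row up to the top row. -/
def typeWord (I : Sentence A) (f : Filling) (v : ℕ) : List A :=
  (((I.zip f).reverse).map (fun p => rowWith p.1 p.2 v)).flatten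

/-- `HasType I f B` : the tableau `f` (of shape `I`) has type the weak sentence `B`,
i.e. for every positive integer `v`, the colors of the boxes of `f` containing `v`
(read left to right, bottom to top) form the `v`-th word of `B`. -/
def HasType (I : Sentence A) (f : Filling) (B : Sentence A) : Prop :=
  ∀ v, 1 ≤ v → typeWord I f v = B.getD (v - 1) []

/-- `K_{J,B}`: the number of colored immaculate tableaux of shape `J` and type `B`. -/
noncomputable def KJB (J B : Sentence A) : ℕ :=
  Set.ncard {f : Filling | IsCIT J f ∧ HasType J f B}

/-! ### Standardization -/

/-- The list of boxes of a filling. -/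
def boxes (f : Filling) : List (ℕ × ℕ) :=
  ((List.range f.length).map
    (fun r => (List.range (f.getD r []).length).map (fun j => (r, j)))).flatten

/-- `beforeB f b b'`: box `b` comes strictly before box `b'` in the type-reading order of `f`
(smaller entries first; among equal entries, lower rows first, and within a row left to right). -/
def beforeB (f : Filling) (b b' : ℕ × ℕ) : Bool :=
  entryAt f b < entryAt f b' ||
    (entryAt f b == entryAt f b' && (b'.1 < b.1 || (b.1 == b'.1 && b.2 < b'.2)))

/-- The standardization of a filling: each box is renumbered (starting from `1`)
according to its position in the type-reading order. -/
def stdFill (f : Filling) : Filling :=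
  (List.range f.length).map (fun r =>
    (List.range (f.getD r []).length).map (fun j =>
      1 + ((boxes f).filter (fun b' => beforeB f b' (r, j))).length))

/-- The number of boxes of a filling. -/
def nBoxes (f : Filling) : ℕ := f.flatten.length

/-- A filling of `n` boxes is standard when its entries are exactly `1, …, n`,
each appearing once. -/
def IsStandardF (f : Filling) : Prop := f.flatten.Perm (List.range' 1 (nBoxes f))

/-! ### Descents and the colored descent composition -/

/-- The (0-indexed) row containing the value `v` in a standard filling. -/
def rowOf (f : Filling) (v : ℕ) : ℕ := f.findIdx (fun row => row.contains v)

/-- The sorted list of descents of a standard filling: those `i` with `1 ≤ i ≤ n-1`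
such that `i+1` lies in a strictly lower row than `i`. -/
def descList (f : Filling) : List ℕ :=
  (List.range' 1 (nBoxes f - 1)).filter (fun i => decide (rowOf f i < rowOf f (i + 1)))

/-- The composition of `n` associated to a set of split positions `d_1 < … < d_k`:
`(d_1, d_2 - d_1, …, n - d_k)`. -/
def compOf (ds : List ℕ) (n : ℕ) : List ℕ :=
  List.zipWith (fun a b => b - a) (0 :: ds) (ds ++ [n])

/-- Split a word into a sentence according to a composition. -/
def splitByComp : List A → List ℕ → List (List A)
  | _, [] => []
  | w, a :: rest => w.take a :: splitByComp (w.drop a) rest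

/-- The color of the box containing the value `v` in a standard filling of shape `I`. -/
def colorOf [Inhabited A] (I : Sentence A) (f : Filling) (v : ℕ) : A :=
  (I.getD (rowOf f v) []).getD ((f.getD (rowOf f v) []).findIdx (fun x => x == v)) default

/-- The maximal word of the colored descent composition of a standard filling of shape `I`:
the colors of its boxes read in the order of their integer entries. -/
def readWord [Inhabited A] (I : Sentence A) (f : Filling) : List A :=
  (List.range (nBoxes f)).map (fun i => colorOf I f (i + 1))

/-- The colored descent composition `co_A(U)` of a standard colored immaculate tableau:
read the colors of the boxes in the order of their entries, starting a new word
immediately after each descent. -/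
def coA [Inhabited A] (I : Sentence A) (f : Filling) : Sentence A :=
  if nBoxes f = 0 then [] else splitByComp (readWord I f) (compOf (descList f) (nBoxes f))

/-- `L_{J,C}`: the number of standard colored immaculate tableaux of shape `J`
with colored descent composition `C`. -/
noncomputable def LJC [Inhabited A] (J C : Sentence A) : ℕ :=
  Set.ncard {f : Filling | IsCIT J f ∧ IsStandardF f ∧ coA J f = C}

/-! ### The colored quasisymmetric functions `QSym_A` -/

/-- A (normal form of a) monomial in the partially commutative variables `x_{a,i}`:
a pair consisting of the list of words `(w_1, …, w_m)` and the list of (strictly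
increasing, positive) second indices `(j_1 < … < j_m)`, representing
`x_{w_1,j_1} ⋯ x_{w_m,j_m}`. -/
abbrev Mono (A : Type*) := List (List A) × List ℕ

/-- A colored quasisymmetric "series": a formal linear combination of monomials,
recorded by its coefficient function.  `QSym_A` itself is the span of the colored
monomial functions `MQ I` inside this space. -/
abbrev QSymA (A : Type*) := Mono A → ℚ

/-- Validity of a monomial normal form: words and indices match up, the indices are
strictly increasing positive integers, and all words are nonempty. -/
def ValidMono (m : Mono A) : Prop :=
  m.1.length = m.2.length ∧ m.2.Chain' (· < ·) ∧ (∀ j ∈ m.2, 1 ≤ j) ∧ ∀ w ∈ m.1, w ≠ []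

open Classical in
/-- The colored monomial quasisymmetric function `M_I`: the sum of all monomials
`x_{w_1,j_1} ⋯ x_{w_m,j_m}` with `j_1 < … < j_m`, where `I = (w_1, …, w_m)`. -/
noncomputable def MQ (I : Sentence A) : QSymA A := fun m =>
  if m.1 = I ∧ ValidMono m then 1 else 0

/-- The largest entry of a filling. -/
def maxEntry (f : Filling) : ℕ := f.flatten.foldr max 0

/-- The monomial `x_T` of a colored immaculate tableau `T = f` of shape `I`:
for `T` of type `B = (u_1, …, u_j)` it is `x_{u_1,1} x_{u_2,2} ⋯ x_{u_j,j}`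
(empty words are skipped). -/
def monoOf (I : Sentence A) (f : Filling) : Mono A :=
  let vs := ((List.range (maxEntry f)).map (· + 1)).filter (fun v => !(typeWord I f v).isEmpty)
  (vs.map (typeWord I f), vs)

/-- The colored dual immaculate function `𝔖*_J = Σ_T x_T`, the sum of the monomials of all
colored immaculate tableaux `T` of shape `J` (its coefficient at a monomial `m` is the
number of such tableaux with `x_T = m`). -/
noncomputable def dualImm (J : Sentence A) : QSymA A := fun m =>
  (Set.ncard {f : Filling | IsCIT J f ∧ monoOf J f = m} : ℚ)

/-- The colored fundamental quasisymmetric function `F_I = Σ_{J ⪯ I} M_J`. -/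
noncomputable def FQ (I : Sentence A) : QSymA A :=
  ∑ᶠ J ∈ {J : Sentence A | Refines J I}, MQ J

/-! ### The colored immaculate descent graph -/

/-- Edges of the colored immaculate descent graph: a directed edge from `I` to `J` (`J ≠ I`)
whenever some standard colored immaculate tableau of shape `I` has colored descent
composition `J`. -/
def IsEdge [Inhabited A] (I J : Sentence A) : Prop := J ≠ I ∧ LJC I J ≠ 0

/-- Directed paths from `I` to `K` in the colored immaculate descent graph, recorded by
their (nonempty) lists of successive vertices; the path `[I]` is the empty path at `I`. -/
def PathsFromTo [Inhabited A] (I K : Sentence A) : Set (List (Sentence A)) :=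
  {p | p.head? = some I ∧ p.getLast? = some K ∧ p.Chain' IsEdge}

/-- The signed weight `(-1)^{ℓ(𝒫)} prod(𝒫)` of a directed path `𝒫`:
`ℓ(𝒫)` is its number of edges and `prod(𝒫)` the product of its edge weights `L_{I,J}`. -/
noncomputable def pathWeight [Inhabited A] (p : List (Sentence A)) : ℚ :=
  ((-1 : ℚ)) ^ (p.length - 1) * ((p.zip p.tail).map (fun e => (LJC e.1 e.2 : ℚ))).prod

/-- `L⁻¹_{I,K} = Σ_𝒫 (-1)^{ℓ(𝒫)} prod(𝒫)`, summed over all directed paths `𝒫`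
from `I` to `K` in the colored immaculate descent graph. -/
noncomputable def Linv [Inhabited A] (I K : Sentence A) : ℚ :=
  ∑ᶠ p ∈ PathsFromTo I K, pathWeight p

/-! ### The colored noncommutative symmetric functions `NSym_A` -/

/-- A formal series over the complete homogeneous basis `{H_I}` of `NSym_A`, recorded by its
coefficient function on (weak) sentences.  `NSym_A` itself consists of the finitely
supported elements supported on genuine sentences; see `InNSym`. -/
abbrev NSymA (A : Type*) := Sentence A → ℚ

/-- Membership in `NSym_A` proper: finitely supported, and supported on genuine sentences. -/
def InNSym (f : NSymA A) : Prop :=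
  (Function.support f).Finite ∧ ∀ I, f I ≠ 0 → IsSentence I

open Classical in
/-- The colored complete homogeneous noncommutative symmetric function
`H_I = H_{w_1} ⋯ H_{w_k}`. -/
noncomputable def Hd (I : Sentence A) : NSymA A := fun J => if J = I then 1 else 0

/-- `H_w` for a single word `w`, with `H_∅ = 1`. -/
noncomputable def Hw (w : List A) : NSymA A := if w.isEmpty then Hd [] else Hd [w]

/-- Multiplication in `NSym_A` (the concatenation product, extended to series):
`H_I · H_J = H_{I ⬝ J}`. -/
def mulN (f g : NSymA A) : NSymA A := fun I =>
  ∑ j ∈ Finset.range (I.length + 1), f (I.take j) * g (I.drop j)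

/-- The duality pairing `⟨·,·⟩ : NSym_A × QSym_A → ℚ`, determined by
`⟨H_I, M_J⟩ = δ_{I,J}`: the `M_I`-coefficient of a quasisymmetric function is its
coefficient on the monomial `x_{w_1,1} x_{w_2,2} ⋯ x_{w_k,k}`. -/
noncomputable def pairNQ (G : NSymA A) (F : QSymA A) : ℚ :=
  ∑ᶠ I ∈ {I : Sentence A | IsSentence I}, G I * F (I, List.range' 1 I.length)

/-- All ways of splitting each word of a list of words into a prefix and a suffix. -/
def splitsOf : List (List A) → List (List (List A) × List (List A))
  | [] => [([], [])]
  | w :: ws =>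
      (((splitsOf ws).map (fun p =>
        (List.range (w.length + 1)).map (fun t => (w.take t :: p.1, w.drop t :: p.2))))).flatten

/-- Restriction of a candidate monomial: keep only the nonempty words together with
their indices. -/
def restrictMono (ws : List (List A)) (js : List ℕ) : Mono A :=
  let ps := (ws.zip js).filter (fun p => !p.1.isEmpty)
  (ps.map Prod.fst, ps.map Prod.snd)

/-- The product of colored quasisymmetric series: the coefficient of a monomial in `F·G`
is the sum, over all ways of writing each of its words as a concatenation of a word of a
monomial of `F` (on the left) and a word of a monomial of `G` (on the right), of the
products of the corresponding coefficients. -/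
def mulQ (F G : QSymA A) : QSymA A := fun m =>
  ((splitsOf m.1).map (fun p => F (restrictMono p.1 m.2) * G (restrictMono p.2 m.2))).sum

/-- The right perp operator `M^⊸` of `M ∈ QSym_A`, the linear operator on `NSym_A`
determined by `⟨M^⊸(H), G⟩ = ⟨H, G·M⟩`; explicitly, for the dual bases `{M_I}` and `{H_I}`,
`M^⊸(H) = Σ_I ⟨H, M_I · M⟩ H_I`. -/
noncomputable def rperp (M : QSymA A) (H : NSymA A) : NSymA A :=
  ∑ᶠ I ∈ {I : Sentence A | IsSentence I}, pairNQ H (mulQ (MQ I) M) • Hd I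

/-- The colored noncommutative Bernstein operator
`𝔹_v = Σ_u Σ_{Q : w(Q^r) = u} (-1)^{ℓ(Q)} H_{v·u} · (Σ_{S ⪰ Q} M_S^⊸)`,
where `Q` runs over all sentences, `u = w(Q^r)` is the concatenation of the words of `Q`
in reverse order, and `S` runs over all coarsenings of `Q`. -/
noncomputable def Bern (v : List A) (f : NSymA A) : NSymA A :=
  ∑ᶠ Q ∈ {Q : Sentence A | IsSentence Q},
    ((-1 : ℚ)) ^ Q.length •
      mulN (Hw (v ++ Q.reverse.flatten))
        (∑ᶠ S ∈ {S : Sentence A | Refines Q S}, rperp (MQ S) f)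

/-- The colored immaculate function `𝔖_J = 𝔹_{v_1} 𝔹_{v_2} ⋯ 𝔹_{v_h}(1)`. -/
noncomputable def ImmS (J : Sentence A) : NSymA A := J.foldr Bern (Hd [])

/-- The colored ribbon function `R_I = Σ_{J ⪰ I} (-1)^{ℓ(J) - ℓ(I)} H_J`. -/
noncomputable def Rib (I : Sentence A) : NSymA A :=
  ∑ᶠ J ∈ {J : Sentence A | Refines I J}, ((-1 : ℚ)) ^ (I.length - J.length) • Hd J

/-- The Pieri relation `J ⊂_w K` for a sentence `J = (v_1, …, v_h)` and a word `w`: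
`K = (u_1, …, u_g)` with `h ≤ g ≤ h+1` (setting `v_{h+1} = ∅`) and `u_j = v_j · q_j`
for words `q_j` (possibly empty) whose reversed concatenation `q_g ⋯ q_1` equals `w`. -/
def PieriRel (J : Sentence A) (w : List A) (K : Sentence A) : Prop :=
  J.length ≤ K.length ∧ K.length ≤ J.length + 1 ∧
  ∃ q : List (List A), q.length = K.length ∧ q.reverse.flatten = w ∧
    ∀ j < K.length, K.getD j [] = J.getD j [] ++ q.getD j []

/-- Right containment of a weak sentence `K` in `J`: same length, and each word of `K` is a
suffix of the corresponding word of `J`. -/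
def RightContained (K J : Sentence A) : Prop :=
  K.length = J.length ∧ ∀ i < J.length, (K.getD i []).IsSuffix (J.getD i [])

/-- The weak sentence `J/_R K`: remove each word of `K` from the right end of the
corresponding word of `J`. -/
def rightQuot (J K : Sentence A) : Sentence A :=
  List.zipWith (fun v u => v.take (v.length - u.length)) J K

/-- Left containment `J ⊆_L I`: `ℓ(J) ≤ ℓ(I)` and each word of `J` is a prefix of the
corresponding word of `I`. -/
def LeftContained (J I : Sentence A) : Prop :=
  J.length ≤ I.length ∧ ∀ i < J.length, (J.getD i []).IsPrefix (I.getD i [])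

/-- A skew colored immaculate tableau of shape `I/J`: a filling of the active boxes
(the `i`-th row keeps the last `|w_i| - |v_i|` boxes) with positive integers, rows weakly
increasing left to right, and the entries in the (active part of the) first column of `I`
strictly increasing top to bottom. -/
def IsSkewCIT (I J : Sentence A) (f : Filling) : Prop :=
  f.map List.length =
    (List.range I.length).map (fun i => (I.getD i []).length - (J.getD i []).length) ∧
  (∀ row ∈ f, row.Chain' (· ≤ ·)) ∧
  ((List.range I.length).filterMap
    (fun i => if (J.getD i []).length = 0 then (f.getD i []).head? else none)).Chain' (· < ·) ∧
  (∀ x ∈ f.flatten, 1 ≤ x)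

/-- The word of the type of a skew tableau at value `v`: the colors of the active boxes with
entry `v`, read left to right, bottom to top. -/
def skewTypeWord (I J : Sentence A) (f : Filling) (v : ℕ) : List A :=
  (((List.range I.length).reverse).map (fun i =>
    rowWith ((I.getD i []).drop (J.getD i []).length) (f.getD i []) v)).flatten

/-- `SkewHasType I J f K` : the skew tableau `f` of shape `I/J` has type `K`. -/
def SkewHasType (I J : Sentence A) (f : Filling) (K : Sentence A) : Prop :=
  ∀ v, 1 ≤ v → skewTypeWord I J f v = K.getD (v - 1) []

/-! ### The complement involution `ψ` and the row-strict functions -/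

/-- The complement `I^c` of a sentence: the unique sentence with the same maximal word
that splits exactly where `I` does not. -/
def complSent (I : Sentence A) : Sentence A :=
  let w := I.flatten
  let n := w.length
  if n = 0 then []
  else
    let splits := (((wl I).scanl (· + ·) 0).drop 1).dropLast
    let csplits := (List.range' 1 (n - 1)).filter (fun i => !(splits.contains i))
    splitByComp w (compOf csplits n)

/-- The `M_I`-coefficient of a colored quasisymmetric function. -/
noncomputable def coeffM (G : QSymA A) (I : Sentence A) : ℚ := G (I, List.range' 1 I.length)

/-- The image of `M_I` under `ψ`, via `M_I = Σ_{J ⪯ I} (-1)^{ℓ(J)-ℓ(I)} F_J` and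
`ψ(F_J) = F_{J^c}`. -/
noncomputable def psiM (I : Sentence A) : QSymA A :=
  ∑ᶠ J ∈ {J : Sentence A | Refines J I}, ((-1 : ℚ)) ^ (J.length - I.length) • FQ (complSent J)

/-- The linear involution `ψ` of `QSym_A`, determined by `ψ(F_I) = F_{I^c}`. -/
noncomputable def psiQ (G : QSymA A) : QSymA A :=
  ∑ᶠ I ∈ {I : Sentence A | IsSentence I}, coeffM G I • psiM I

/-- A colored row-strict immaculate tableau of shape `I`: entries strictly increase left to
right along each row and weakly increase top to bottom down the first column. -/
def IsCRSIT (I : Sentence A) (f : Filling) : Prop :=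
  f.map List.length = I.map List.length ∧
  (∀ row ∈ f, row.Chain' (· < ·)) ∧
  (f.filterMap List.head?).Chain' (· ≤ ·) ∧
  (∀ x ∈ f.flatten, 1 ≤ x)

/-- The word of the type of a row-strict tableau at value `v`: the colors of the boxes with
entry `v`, read left to right, top to bottom. -/
def rsTypeWord (I : Sentence A) (f : Filling) (v : ℕ) : List A :=
  ((I.zip f).map (fun p => rowWith p.1 p.2 v)).flatten

/-- The monomial `x_T` of a colored row-strict immaculate tableau. -/
def rsMonoOf (I : Sentence A) (f : Filling) : Mono A :=
  let vs := ((List.range (maxEntry f)).map (· + 1)).filter (fun v => !(rsTypeWord I f v).isEmpty)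
  (vs.map (rsTypeWord I f), vs)

/-- The colored row-strict dual immaculate function `ℛ𝔖*_J = Σ_T x_T`, summed over all
colored row-strict immaculate tableaux `T` of shape `J`. -/
noncomputable def rsDualImm (J : Sentence A) : QSymA A := fun m =>
  (Set.ncard {f : Filling | IsCRSIT J f ∧ rsMonoOf J f = m} : ℚ)

/-- `α ⪰ β` in the reverse lexicographic order on compositions: at the first index where
they differ, `α` has the *smaller* entry (padding with zeros). -/
def RevLexGE (α β : List ℕ) : Prop :=
  α = β ∨ ∃ i, (∀ j < i, α.getD j 0 = β.getD j 0) ∧ α.getD i 0 < β.getD i 0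

/-! ### Uncolored (ordinary) versions, for `QSym` -/

namespace Uncolored

/-- A composition: a list of positive integers. -/
def IsComposition (α : List ℕ) : Prop := ∀ a ∈ α, 1 ≤ a

/-- `β ⪯ α`: the composition `α` is obtained by summing adjacent parts of `β`. -/
def RefinesC (β α : List ℕ) : Prop :=
  ∃ P : List (List ℕ), (∀ p ∈ P, p ≠ []) ∧ P.flatten = β ∧ P.map List.sum = α

/-- A monomial `x_{i_1}^{a_1} ⋯ x_{i_m}^{a_m}` recorded by its exponents and its
strictly increasing positive indices. -/
abbrev MonoU := List ℕ × List ℕ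

/-- A quasisymmetric "series", recorded by its coefficient function on monomials.
`QSym` is the span of the monomial functions `MU α` inside this space. -/
abbrev QSymU := MonoU → ℚ

/-- Validity of a monomial: matching lengths, strictly increasing positive indices,
positive exponents. -/
def ValidMonoU (m : MonoU) : Prop :=
  m.1.length = m.2.length ∧ m.2.Chain' (· < ·) ∧ (∀ j ∈ m.2, 1 ≤ j) ∧ ∀ a ∈ m.1, 1 ≤ a

open Classical in
/-- The monomial quasisymmetric function `M_α`. -/
noncomputable def MU (α : List ℕ) : QSymU := fun m =>
  if m.1 = α ∧ ValidMonoU m then 1 else 0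

/-- The fundamental quasisymmetric function `F_α = Σ_{β ⪯ α} M_β`. -/
noncomputable def FU (α : List ℕ) : QSymU :=
  ∑ᶠ β ∈ {β : List ℕ | RefinesC β α}, MU β

/-- An immaculate tableau of shape `α`: positive integer entries, rows weakly increasing
left to right, first column strictly increasing top to bottom. -/
def IsIT (α : List ℕ) (f : Filling) : Prop :=
  f.map List.length = α ∧
  (∀ row ∈ f, row.Chain' (· ≤ ·)) ∧
  (f.filterMap List.head?).Chain' (· < ·) ∧
  (∀ x ∈ f.flatten, 1 ≤ x)

/-- The number of boxes of `f` with entry `v`. -/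
def countOf (f : Filling) (v : ℕ) : ℕ := (f.flatten.filter (fun x => x == v)).length

/-- The monomial `x^T` of an immaculate tableau `T` of type `β`:
`x_1^{β_1} ⋯ x_h^{β_h}` (zero exponents skipped). -/
def monoOfU (f : Filling) : MonoU :=
  let vs := ((List.range (maxEntry f)).map (· + 1)).filter (fun v => decide (countOf f v ≠ 0))
  (vs.map (countOf f), vs)

/-- The dual immaculate function `𝔖*_α = Σ_T x^T`, summed over all immaculate tableaux
of shape `α`. -/
noncomputable def dualImmU (α : List ℕ) : QSymU := fun m =>
  (Set.ncard {f : Filling | IsIT α f ∧ monoOfU f = m} : ℚ)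

/-- The descent composition `co(U)` of a standard immaculate tableau. -/
def descComp (f : Filling) : List ℕ :=
  if nBoxes f = 0 then [] else compOf (descList f) (nBoxes f)

/-- `L_{α,β}`: the number of standard immaculate tableaux of shape `α` with descent
composition `β`. -/
noncomputable def LU (α β : List ℕ) : ℕ :=
  Set.ncard {f : Filling | IsIT α f ∧ IsStandardF f ∧ descComp f = β}

/-- Edges of the immaculate descent graph `𝔇^n`. -/
def IsEdgeU (α β : List ℕ) : Prop := β ≠ α ∧ LU α β ≠ 0

/-- Directed paths from `α` to `β` in the immaculate descent graph, recorded by their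
lists of successive vertices; `[α]` is the empty path at `α`. -/
def PathsU (α β : List ℕ) : Set (List (List ℕ)) :=
  {p | p.head? = some α ∧ p.getLast? = some β ∧ p.Chain' IsEdgeU}

/-- The signed weight `(-1)^{ℓ(𝒫)} prod(𝒫)` of a path. -/
noncomputable def pathWeightU (p : List (List ℕ)) : ℚ :=
  ((-1 : ℚ)) ^ (p.length - 1) * ((p.zip p.tail).map (fun e => (LU e.1 e.2 : ℚ))).prod

/-- `L⁻¹_{α,β} = Σ_𝒫 (-1)^{ℓ(𝒫)} prod(𝒫)`, over directed paths from `α` to `β` in `𝔇^n`. -/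
noncomputable def LinvU (α β : List ℕ) : ℚ :=
  ∑ᶠ p ∈ PathsU α β, pathWeightU p

end Uncolored

end ColoredImm


namespace ColoredImm

section PartOne
variable {A : Type*}

lemma isSentence_nil : IsSentence ([] : Sentence A) := by
  intro w hw; simp at hw

lemma isSentence_append {I J : Sentence A} : IsSentence (I ++ J) ↔ IsSentence I ∧ IsSentence J := by
  simp only [IsSentence, List.mem_append]
  constructor
  · intro h; exact ⟨fun w hw => h w (Or.inl hw), fun w hw => h w (Or.inr hw)⟩
  · rintro ⟨h1, h2⟩ w (hw | hw)
    · exact h1 w hw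
    · exact h2 w hw

lemma isSentence_singleton {w : List A} : IsSentence [w] ↔ w ≠ [] := by
  simp [IsSentence]

lemma isSentence_cons {w : List A} {I : Sentence A} :
    IsSentence (w :: I) ↔ w ≠ [] ∧ IsSentence I := by
  simp [IsSentence]

lemma sentence_flatten_eq_nil {I : Sentence A} (h : IsSentence I) (h2 : I.flatten = []) : I = [] := by
  cases I with
  | nil => rfl
  | cons w I =>
    simp only [List.flatten_cons, List.append_eq_nil_iff] at h2
    exact absurd h2.1 ((isSentence_cons.1 h).1)

/-- The set of sentences with a given maximal word is finite. -/
lemma refs_finite (s : List A) : {Q : Sentence A | IsSentence Q ∧ Q.flatten = s}.Finite := by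
  induction s with
  | nil =>
    apply Set.Finite.subset (Set.finite_singleton ([] : Sentence A))
    rintro Q ⟨h1, h2⟩
    exact sentence_flatten_eq_nil h1 h2
  | cons a s ih =>
    have h2 := (ih.image (fun Q => [a] :: Q)).union
      (ih.image (fun Q => (a :: Q.headD []) :: Q.tail))
    apply h2.subset
    rintro Q ⟨hQ1, hQ2⟩
    cases Q with
    | nil => simp at hQ2
    | cons q Q =>
      obtain ⟨hq, hQ⟩ := isSentence_cons.1 hQ1
      cases q with
      | nil => exact absurd rfl hq
      | cons b q =>
        simp only [List.flatten_cons, List.cons_append, List.cons.injEq] at hQ2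
        obtain ⟨rfl, hQ2⟩ := hQ2
        cases q with
        | nil =>
          left
          exact ⟨Q, ⟨hQ, by simpa using hQ2⟩, rfl⟩
        | cons c q =>
          right
          exact ⟨(c :: q) :: Q, ⟨isSentence_cons.2 ⟨by simp, hQ⟩, by simpa using hQ2⟩, rfl⟩

/-- All sentences with maximal word `s`. -/
noncomputable def refs (s : List A) : Finset (Sentence A) := (refs_finite s).toFinset

lemma mem_refs {s : List A} {Q : Sentence A} : Q ∈ refs s ↔ IsSentence Q ∧ Q.flatten = s := by
  simp [refs]

lemma refs_nil : refs ([] : List A) = {[]} := by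
  ext Q
  simp only [mem_refs, Finset.mem_singleton]
  constructor
  · rintro ⟨h1, h2⟩; exact sentence_flatten_eq_nil h1 h2
  · rintro rfl; exact ⟨isSentence_nil, rfl⟩

lemma refines_nil_right {C : Sentence A} : Refines C [] ↔ C = [] := by
  constructor
  · rintro ⟨P, h1, h2, h3⟩
    simp only [List.map_eq_nil_iff] at h3
    subst h3; simpa using h2.symm
  · rintro rfl; exact ⟨[], by simp, rfl, rfl⟩

lemma refines_snoc {C J : Sentence A} {x : List A} :
    Refines C (J ++ [x]) ↔ ∃ C1 C2, C = C1 ++ C2 ∧ C2 ≠ [] ∧ C2.flatten = x ∧ Refines C1 J := by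
  constructor
  · rintro ⟨P, h1, h2, h3⟩
    rw [List.map_eq_append_iff] at h3
    obtain ⟨P1, P2, rfl, h4, h5⟩ := h3
    rw [List.map_eq_singleton_iff] at h5
    obtain ⟨p, rfl, h6⟩ := h5
    refine ⟨P1.flatten, p, by simpa using h2.symm, h1 p (by simp), h6, P1, ?_, rfl, h4⟩
    intro q hq; exact h1 q (by simp [hq])
  · rintro ⟨C1, C2, rfl, hne, rfl, P, h1, h2, h3⟩
    refine ⟨P ++ [C2], ?_, by simp [h2], by simp [h3]⟩
    intro p hp
    simp only [List.mem_append, List.mem_singleton] at hp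
    rcases hp with hp | rfl
    · exact h1 p hp
    · exact hne

lemma refines_flatten {C J : Sentence A} (h : Refines C J) : J.flatten = C.flatten := by
  obtain ⟨P, -, rfl, rfl⟩ := h
  rw [List.flatten_flatten]

lemma refines_length {C J : Sentence A} (h : Refines C J) : J.length ≤ C.length := by
  obtain ⟨P, h1, rfl, rfl⟩ := h
  induction P with
  | nil => simp
  | cons p P ih =>
    have := ih (fun q hq => h1 q (by simp [hq]))
    have h2 : p ≠ [] := h1 p (by simp)
    have h3 := List.length_pos_iff.2 h2
    simp only [List.map_cons, List.length_cons, List.flatten_cons, List.length_append] at *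
    omega

lemma refines_isSentence {C J : Sentence A} (hC : IsSentence C) (h : Refines C J) : IsSentence J := by
  obtain ⟨P, h1, rfl, rfl⟩ := h
  intro w hw
  obtain ⟨p, hp, rfl⟩ := List.mem_map.1 hw
  intro h0
  have : p = [] := sentence_flatten_eq_nil (fun w hw => hC w (List.mem_flatten.2 ⟨p, hp, hw⟩)) h0
  exact h1 p hp this

lemma coarse_finite {C : Sentence A} (hC : IsSentence C) : {J : Sentence A | Refines C J}.Finite := by
  apply (refs_finite C.flatten).subset
  intro J hJ
  exact ⟨refines_isSentence hC hJ, refines_flatten hJ⟩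

lemma fine_finite (S : Sentence A) : {Q : Sentence A | IsSentence Q ∧ Refines Q S}.Finite := by
  apply (refs_finite S.flatten).subset
  rintro Q ⟨h1, h2⟩
  exact ⟨h1, (refines_flatten h2).symm⟩

/-- All sentences refining `S`. -/
noncomputable def fines (S : Sentence A) : Finset (Sentence A) := (fine_finite S).toFinset

lemma mem_fines {S Q : Sentence A} : Q ∈ fines S ↔ IsSentence Q ∧ Refines Q S := by
  simp [fines]

lemma fines_nil : fines ([] : Sentence A) = {[]} := by
  ext Q
  simp only [mem_fines, Finset.mem_singleton, refines_nil_right]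
  constructor
  · exact fun h => h.2
  · rintro rfl; exact ⟨isSentence_nil, rfl⟩

lemma append_inj_flatten {Q1 Q2 R1 R2 : Sentence A} (h1 : IsSentence Q1) (h2 : IsSentence R1)
    (hf : Q1.flatten = R1.flatten) (hQ2 : IsSentence Q2) (hR2 : IsSentence R2)
    (h : Q1 ++ Q2 = R1 ++ R2) : Q1 = R1 ∧ Q2 = R2 := by
  rw [List.append_eq_append_iff] at h
  rcases h with ⟨T, rfl, rfl⟩ | ⟨T, rfl, rfl⟩
  · have : T = [] := by
      apply sentence_flatten_eq_nil (isSentence_append.1 h2).2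
      simpa using hf
    subst this; simp
  · have : T = [] := by
      apply sentence_flatten_eq_nil (isSentence_append.1 h1).2
      simpa using hf
    subst this; simp

lemma sum_fines_snoc {M : Type*} [AddCommMonoid M] (φ : Sentence A → M) (S : Sentence A) (s : List A)
    (hs : s ≠ []) :
    ∑ Q ∈ fines (S ++ [s]), φ Q = ∑ Q1 ∈ fines S, ∑ Q2 ∈ refs s, φ (Q1 ++ Q2) := by
  rw [← Finset.sum_product']
  symm
  apply Finset.sum_bij (fun p _ => p.1 ++ p.2)
  · rintro ⟨Q1, Q2⟩ h
    simp only [Finset.mem_product, mem_fines, mem_refs] at h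
    obtain ⟨⟨h1, h2⟩, h3, h4⟩ := h
    rw [mem_fines]
    refine ⟨isSentence_append.2 ⟨h1, h3⟩, refines_snoc.2 ⟨Q1, Q2, rfl, ?_, h4, h2⟩⟩
    rintro rfl
    exact hs h4.symm
  · rintro ⟨Q1, Q2⟩ h ⟨R1, R2⟩ h' heq
    simp only [Finset.mem_product, mem_fines, mem_refs] at h h'
    obtain ⟨⟨h1, h2⟩, h3, h4⟩ := h
    obtain ⟨⟨h1', h2'⟩, h3', h4'⟩ := h'
    obtain ⟨rfl, rfl⟩ := append_inj_flatten h1 h1'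
      ((refines_flatten h2).symm.trans (refines_flatten h2')) h3 h3' heq
    rfl
  · intro Q hQ
    rw [mem_fines] at hQ
    obtain ⟨hQ, hr⟩ := hQ
    obtain ⟨Q1, Q2, rfl, hne, hfl, hr⟩ := refines_snoc.1 hr
    obtain ⟨h1, h2⟩ := isSentence_append.1 hQ
    exact ⟨(Q1, Q2), by simp [mem_fines, mem_refs, *], rfl⟩
  · intro _ _; rfl

lemma flattenWS_append (I J : Sentence A) : flattenWS (I ++ J) = flattenWS I ++ flattenWS J := by
  simp [flattenWS]

lemma flattenWS_isSentence (I : Sentence A) : IsSentence (flattenWS I) := by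
  intro w hw
  simp only [flattenWS, List.mem_filter] at hw
  simpa using hw.2

lemma flattenWS_self {I : Sentence A} (h : IsSentence I) : flattenWS I = I := by
  apply List.filter_eq_self.2
  intro w hw
  simpa using h w hw

lemma sum_fines_flattenWS_snoc {M : Type*} [AddCommMonoid M] (φ : Sentence A → M) (S : Sentence A)
    (s : List A) :
    ∑ Q ∈ fines (flattenWS (S ++ [s])), φ Q
      = ∑ Q1 ∈ fines (flattenWS S), ∑ Q2 ∈ refs s, φ (Q1 ++ Q2) := by
  rw [flattenWS_append]
  by_cases hs : s = []
  · subst hs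
    simp [refs_nil, flattenWS]
  · rw [← sum_fines_snoc φ _ s hs, flattenWS_self (isSentence_singleton.2 hs)]

/-- The convolution-inverse recursion. -/
lemma sum_refs_rec {M : Type*} [AddCommGroup M] [Module ℚ M] (φ : List A → M) (s : List A) (hs : s ≠ [])
    (v : List A) :
    ∑ t ∈ Finset.range (s.length + 1), ∑ Q ∈ refs (s.take t),
      ((-1 : ℚ)) ^ Q.length • φ (v ++ s.drop t ++ Q.reverse.flatten) = 0 := by
  rw [Finset.sum_range_succ]
  have key : ∑ Q ∈ refs s, ((-1 : ℚ)) ^ Q.length • φ (v ++ Q.reverse.flatten)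
    = ∑ t ∈ Finset.range s.length, ∑ Q ∈ refs (s.take t),
      ((-1 : ℚ)) ^ (Q.length + 1) • φ (v ++ s.drop t ++ Q.reverse.flatten) := by
    rw [Finset.sum_sigma']
    symm
    apply Finset.sum_bij (fun p _ => p.2 ++ [s.drop p.1])
    · rintro ⟨t, Q⟩ h
      simp only [Finset.mem_sigma, Finset.mem_range, mem_refs] at h ⊢
      obtain ⟨ht, hQ, hf⟩ := h
      refine ⟨isSentence_append.2 ⟨hQ, isSentence_singleton.2 ?_⟩, by simp [hf]⟩
      rw [Ne, List.drop_eq_nil_iff]; omega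
    · rintro ⟨t, Q⟩ h ⟨t', Q'⟩ h' heq
      simp only [Finset.mem_sigma, Finset.mem_range, mem_refs] at h h' heq
      obtain ⟨h1, h2⟩ := List.append_inj' heq rfl
      subst h1
      simp only [List.cons.injEq, and_true] at h2
      have := congrArg List.length h2
      simp only [List.length_drop] at this
      have : t = t' := by omega
      subst this; rfl
    · intro Q hQ
      rw [mem_refs] at hQ
      obtain ⟨hQ, hf⟩ := hQ
      rcases List.eq_nil_or_concat Q with rfl | ⟨Q', x, rfl⟩
      · exact absurd hf.symm hs
      · rw [List.concat_eq_append] at *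
        obtain ⟨h1, h2⟩ := isSentence_append.1 hQ
        rw [isSentence_singleton] at h2
        simp only [List.flatten_append, List.flatten_cons, List.flatten_nil, List.append_nil] at hf
        refine ⟨⟨Q'.flatten.length, Q'⟩, ?_, ?_⟩
        · simp only [Finset.mem_sigma, Finset.mem_range, mem_refs]
          refine ⟨?_, h1, ?_⟩
          · rw [← hf, List.length_append]
            have := List.length_pos_iff.2 h2
            omega
          · rw [← hf]; simp
        · simp only [← hf]; simp
    · rintro ⟨t, Q⟩ h
      simp [List.append_assoc]
  simp only [List.take_length, List.drop_length, List.append_nil]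
  rw [key, ← Finset.sum_add_distrib]
  apply Finset.sum_eq_zero
  intro t _
  rw [← Finset.sum_add_distrib]
  apply Finset.sum_eq_zero
  intro Q _
  rw [pow_succ]; simp

end PartOne
end ColoredImm

namespace ColoredImm

section PartTwo
variable {A : Type*}

lemma mulN_add_left (f g h : NSymA A) : mulN (f + g) h = mulN f h + mulN g h := by
  funext I; simp [mulN, add_mul, Finset.sum_add_distrib]

lemma mulN_add_right (f g h : NSymA A) : mulN f (g + h) = mulN f g + mulN f h := by
  funext I; simp [mulN, mul_add, Finset.sum_add_distrib]

lemma mulN_smul_left (c : ℚ) (f h : NSymA A) : mulN (c • f) h = c • mulN f h := by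
  funext I; simp [mulN, Finset.mul_sum, mul_assoc]

lemma mulN_smul_right (c : ℚ) (f h : NSymA A) : mulN f (c • h) = c • mulN f h := by
  funext I; simp [mulN, Finset.mul_sum, mul_left_comm]

/-- Left multiplication by `f`. -/
def mulL (f : NSymA A) : NSymA A →ₗ[ℚ] NSymA A where
  toFun g := mulN f g
  map_add' := mulN_add_right f
  map_smul' c g := mulN_smul_right c f g

/-- Right multiplication by `g`. -/
def mulR (g : NSymA A) : NSymA A →ₗ[ℚ] NSymA A where
  toFun f := mulN f g
  map_add' f f' := mulN_add_left f f' g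
  map_smul' c f := mulN_smul_left c f g

lemma mulL_apply (f g : NSymA A) : mulL f g = mulN f g := rfl
lemma mulR_apply (f g : NSymA A) : mulR g f = mulN f g := rfl

lemma mulN_Hd_Hd (I J : Sentence A) : mulN (Hd I) (Hd J) = Hd (I ++ J) := by
  funext K
  simp only [mulN, Hd]
  by_cases h : K = I ++ J
  · subst h
    rw [Finset.sum_eq_single I.length]
    · simp
    · intro j hj hne
      rw [if_neg, zero_mul]
      intro h2
      have := congrArg List.length h2
      simp only [List.length_take, List.length_append] at this
      simp only [Finset.mem_range, List.length_append] at hj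
      omega
    · intro h; exact absurd (by simp) h
  · rw [if_neg h]
    apply Finset.sum_eq_zero
    intro j _
    by_cases h1 : K.take j = I
    · have h2 : ¬ K.drop j = J := by
        intro h2
        exact h (by rw [← h1, ← h2, List.take_append_drop])
      rw [if_neg h2, mul_zero]
    · rw [if_neg h1, zero_mul]

lemma Hw_eq (w : List A) : Hw w = Hd (flattenWS [w]) := by
  cases w <;> simp [Hw, flattenWS]

lemma splitsOf_length {J : List (List A)} : ∀ p ∈ splitsOf J,
    p.1.length = J.length ∧ p.2.length = J.length := by
  induction J with
  | nil => intro p hp; simp [splitsOf] at hp; subst hp; simp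
  | cons w J ih =>
    intro p hp
    simp only [splitsOf, List.mem_flatten, List.mem_map] at hp
    obtain ⟨l, ⟨q, hq, rfl⟩, hp⟩ := hp
    simp only [List.mem_map] at hp
    obtain ⟨t, -, rfl⟩ := hp
    simpa using ih q hq

lemma list_sum_flatten_map {M α : Type*} [AddCommMonoid M] (L : List (List α)) (φ : α → M) :
    (L.flatten.map φ).sum = (L.map (fun l => (l.map φ).sum)).sum := by
  induction L with
  | nil => simp
  | cons l L ih =>
    rw [List.flatten_cons, List.map_append, List.sum_append, ih, List.map_cons, List.sum_cons]

lemma list_range_sum {M : Type*} [AddCommMonoid M] (n : ℕ) (φ : ℕ → M) :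
    ((List.range n).map φ).sum = ∑ t ∈ Finset.range n, φ t := by
  induction n with
  | zero => simp
  | succ n ih => rw [List.range_succ, Finset.sum_range_succ]; simp [ih]

lemma list_sum_finset_comm {M α β : Type*} [AddCommMonoid M] (l : List α) (s : Finset β)
    (φ : α → β → M) :
    (l.map (fun x => ∑ y ∈ s, φ x y)).sum = ∑ y ∈ s, (l.map (fun x => φ x y)).sum := by
  induction l with
  | nil => simp
  | cons x l ih => simp [ih, Finset.sum_add_distrib]

lemma splitsOf_cons_sum {M : Type*} [AddCommMonoid M] (w : List A) (J : List (List A))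
    (φ : List (List A) × List (List A) → M) :
    ((splitsOf (w :: J)).map φ).sum = ((splitsOf J).map (fun p =>
      ∑ t ∈ Finset.range (w.length + 1), φ (w.take t :: p.1, w.drop t :: p.2))).sum := by
  simp only [splitsOf, list_sum_flatten_map, List.map_map]
  congr 1
  apply List.map_congr_left
  intro p _
  rw [← list_range_sum]
  simp [Function.comp_def]

lemma splitsOf_snoc_sum {M : Type*} [AddCommMonoid M] (w : List A) (J : List (List A)) :
    ∀ (φ : List (List A) × List (List A) → M),
    ((splitsOf (J ++ [w])).map φ).sum = ((splitsOf J).map (fun p =>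
      ∑ t ∈ Finset.range (w.length + 1), φ (p.1 ++ [w.take t], p.2 ++ [w.drop t]))).sum := by
  induction J with
  | nil =>
    intro φ
    rw [List.nil_append, splitsOf_cons_sum]; simp [splitsOf]
  | cons x J ih =>
    intro φ
    rw [List.cons_append, splitsOf_cons_sum, splitsOf_cons_sum, ih]
    congr 1
    apply List.map_congr_left
    intro p _
    rw [Finset.sum_comm]
    rfl

lemma restrictMono_fst {ws : List (List A)} {js : List ℕ} (h : ws.length = js.length) :
    (restrictMono ws js).1 = flattenWS ws := by
  have h2 : ws = (ws.zip js).map Prod.fst := by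
    rw [List.map_fst_zip]; omega
  conv_rhs => rw [h2]
  simp only [restrictMono, flattenWS, List.filter_map]
  rfl

lemma restrictMono_valid (ws : List (List A)) (n : ℕ) (h : ws.length = n) :
    ValidMono (restrictMono ws (List.range' 1 n)) := by
  have hsub : List.Sublist (restrictMono ws (List.range' 1 n)).2 (List.range' 1 n) := by
    have h2 : (ws.zip (List.range' 1 n)).map Prod.snd = List.range' 1 n := by
      rw [List.map_snd_zip]; simp [h]
    conv_rhs => rw [← h2]
    exact List.Sublist.map _ List.filter_sublist
  refine ⟨by simp [restrictMono], ?_, ?_, ?_⟩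
  · have : (List.range' 1 n).Pairwise (· < ·) := List.pairwise_lt_range'
    exact (this.sublist hsub).isChain
  · intro j hj
    have := hsub.subset hj
    simp at this; omega
  · rw [restrictMono_fst (by simp [h])]
    exact flattenWS_isSentence ws

open Classical in
lemma mulQ_MQ (I S J : Sentence A) :
    mulQ (MQ I) (MQ S) (J, List.range' 1 J.length) = ((splitsOf J).map (fun p =>
      if flattenWS p.1 = I ∧ flattenWS p.2 = S then (1 : ℚ) else 0)).sum := by
  simp only [mulQ]
  congr 1
  apply List.map_congr_left
  intro p hp
  obtain ⟨h1, h2⟩ := splitsOf_length p hp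
  simp only [MQ, restrictMono_valid _ _ h1, restrictMono_valid _ _ h2, and_true]
  rw [restrictMono_fst (by simp [h1]), restrictMono_fst (by simp [h2])]
  by_cases ha : flattenWS p.1 = I <;> by_cases hb : flattenWS p.2 = S <;> simp [ha, hb]

/-- Closed form for the Bernstein operator on `H_J`. -/
noncomputable def BH (v : List A) (J : Sentence A) : NSymA A :=
  ((splitsOf J).map (fun p => ∑ Q ∈ fines (flattenWS p.2), ((-1 : ℚ)) ^ Q.length •
    mulN (Hw (v ++ Q.reverse.flatten)) (Hd (flattenWS p.1)))).sum

lemma finsum_mem_finset_sub {M α : Type*} [AddCommMonoid M] (f : α → M) (s : Set α) (t : Finset α)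
    (h1 : ∀ x ∈ s, f x ≠ 0 → x ∈ t) (h2 : ∀ x ∈ t, x ∈ s) :
    ∑ᶠ x ∈ s, f x = ∑ x ∈ t, f x :=
  finsum_mem_eq_sum_of_subset f (fun x hx => h1 x hx.1 hx.2) (fun x hx => h2 x hx)

lemma pairNQ_sum {ι : Type*} (s : Finset ι) (c : ι → ℚ) (g : ι → Sentence A)
    (hg : ∀ i ∈ s, IsSentence (g i)) (F : QSymA A) :
    pairNQ (∑ i ∈ s, c i • Hd (g i)) F
      = ∑ i ∈ s, c i * F (g i, List.range' 1 (g i).length) := by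
  classical
  unfold pairNQ
  rw [finsum_mem_finset_sub _ _ (s.image g)]
  · simp only [Finset.sum_apply, Pi.smul_apply, smul_eq_mul, Finset.sum_mul]
    rw [Finset.sum_comm]
    apply Finset.sum_congr rfl
    intro i hi
    rw [Finset.sum_eq_single (g i)]
    · simp [Hd]
    · intro b _ hb; simp [Hd, hb]
    · intro h; exact absurd (Finset.mem_image_of_mem g hi) h
  · intro I _ hne
    by_contra hI
    apply hne
    have : (∑ i ∈ s, c i • Hd (g i)) I = 0 := by
      rw [Finset.sum_apply]
      apply Finset.sum_eq_zero
      intro i hi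
      have : I ≠ g i := by
        rintro rfl; exact hI (Finset.mem_image_of_mem g hi)
      simp [Hd, this]
    rw [this, zero_mul]
  · intro I hI
    obtain ⟨i, hi, rfl⟩ := Finset.mem_image.1 hI
    exact hg i hi

lemma list_sum_smul {α : Type*} (l : List α) (φ : α → ℚ) (x : NSymA A) :
    (l.map φ).sum • x = (l.map (fun a => φ a • x)).sum := by
  induction l with
  | nil => simp
  | cons a l ih => simp [add_smul, ih]

open Classical in
lemma rperp_sum {ι : Type*} (s : Finset ι) (c : ι → ℚ) (g : ι → Sentence A)
    (hg : ∀ i ∈ s, IsSentence (g i)) (S : Sentence A) :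
    rperp (MQ S) (∑ i ∈ s, c i • Hd (g i))
      = ∑ i ∈ s, c i • ((splitsOf (g i)).map (fun p =>
          if flattenWS p.2 = S then Hd (flattenWS p.1) else 0)).sum := by
  unfold rperp
  simp only [pairNQ_sum s c g hg, mulQ_MQ]
  let T : Finset (Sentence A) :=
    s.biUnion (fun i => ((splitsOf (g i)).map (fun p => flattenWS p.1)).toFinset)
  have hT : ∀ i ∈ s, ∀ p ∈ splitsOf (g i), flattenWS p.1 ∈ T := by
    intro i hi p hp
    simp only [T, Finset.mem_biUnion, List.mem_toFinset, List.mem_map]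
    exact ⟨i, hi, p, hp, rfl⟩
  rw [finsum_mem_finset_sub _ _ T]
  · simp only [Finset.sum_smul]
    rw [Finset.sum_comm]
    apply Finset.sum_congr rfl
    intro i hi
    simp only [mul_smul]
    rw [← Finset.smul_sum]
    congr 1
    simp only [list_sum_smul]
    rw [← list_sum_finset_comm]
    congr 1
    apply List.map_congr_left
    intro p hp
    rw [Finset.sum_eq_single (flattenWS p.1)]
    · by_cases h : flattenWS p.2 = S <;> simp [h]
    · intro b _ hb
      rw [if_neg, zero_smul]
      rintro ⟨h, -⟩; exact hb h.symm
    · intro h; exact absurd (hT i hi p hp) h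
  · intro I _ hne
    by_contra hI
    apply hne
    rw [Finset.sum_eq_zero, zero_smul]
    intro i hi
    rw [List.sum_eq_zero, mul_zero]
    intro x hx
    obtain ⟨p, hp, rfl⟩ := List.mem_map.1 hx
    rw [if_neg]
    rintro ⟨rfl, -⟩
    exact hI (hT i hi p hp)
  · intro I hI
    simp only [T, Finset.mem_biUnion, List.mem_toFinset, List.mem_map] at hI
    obtain ⟨i, hi, p, hp, rfl⟩ := hI
    exact flattenWS_isSentence _

open Classical in
lemma sum_coarse_rperp {ι : Type*} (s : Finset ι) (c : ι → ℚ) (g : ι → Sentence A)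
    (hg : ∀ i ∈ s, IsSentence (g i)) (Q : Sentence A) (hQ : IsSentence Q) :
    ∑ᶠ S ∈ {S : Sentence A | Refines Q S}, rperp (MQ S) (∑ i ∈ s, c i • Hd (g i))
      = ∑ i ∈ s, c i • ((splitsOf (g i)).map (fun p =>
          if Refines Q (flattenWS p.2) then Hd (flattenWS p.1) else 0)).sum := by
  rw [finsum_mem_eq_finite_toFinset_sum _ (coarse_finite hQ)]
  simp only [rperp_sum s c g hg]
  rw [Finset.sum_comm]
  apply Finset.sum_congr rfl
  intro i hi
  rw [← Finset.smul_sum, ← list_sum_finset_comm]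
  congr 2
  apply List.map_congr_left
  intro p hp
  rw [Finset.sum_ite_eq]
  simp

lemma Bern_sum {ι : Type*} (s : Finset ι) (c : ι → ℚ) (g : ι → Sentence A)
    (hg : ∀ i ∈ s, IsSentence (g i)) (v : List A) :
    Bern v (∑ i ∈ s, c i • Hd (g i)) = ∑ i ∈ s, c i • BH v (g i) := by
  classical
  unfold Bern
  let T : Finset (Sentence A) :=
    s.biUnion (fun i => ((splitsOf (g i)).toFinset).biUnion (fun p => fines (flattenWS p.2)))
  have hT : ∀ i ∈ s, ∀ p ∈ splitsOf (g i), fines (flattenWS p.2) ⊆ T := by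
    intro i hi p hp Q hQ
    simp only [T, Finset.mem_biUnion, List.mem_toFinset]
    exact ⟨i, hi, p, hp, hQ⟩
  have hTs : ∀ Q ∈ T, IsSentence Q := by
    intro Q hQ
    simp only [T, Finset.mem_biUnion, List.mem_toFinset] at hQ
    obtain ⟨i, hi, p, hp, hQ⟩ := hQ
    exact (mem_fines.1 hQ).1
  rw [finsum_mem_finset_sub _ _ T]
  · have h1 : ∀ Q ∈ T, ((-1 : ℚ)) ^ Q.length • mulN (Hw (v ++ Q.reverse.flatten))
        (∑ᶠ S ∈ {S : Sentence A | Refines Q S}, rperp (MQ S) (∑ i ∈ s, c i • Hd (g i)))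
        = ∑ i ∈ s, c i • ((splitsOf (g i)).map (fun p => if Refines Q (flattenWS p.2) then
          ((-1 : ℚ)) ^ Q.length • mulN (Hw (v ++ Q.reverse.flatten)) (Hd (flattenWS p.1))
            else 0)).sum := by
      intro Q hQ
      rw [sum_coarse_rperp s c g hg Q (hTs Q hQ), ← mulL_apply, map_sum, Finset.smul_sum]
      apply Finset.sum_congr rfl
      intro i _
      rw [map_smul, smul_comm, map_list_sum, List.smul_sum, List.map_map, List.map_map]
      congr 2
      apply List.map_congr_left
      intro p _
      simp only [Function.comp]
      split_ifs
      · rfl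
      · simp
    rw [Finset.sum_congr rfl h1, Finset.sum_comm]
    apply Finset.sum_congr rfl
    intro i hi
    rw [← Finset.smul_sum, ← list_sum_finset_comm]
    congr 1
    unfold BH
    congr 1
    apply List.map_congr_left
    intro p hp
    rw [← Finset.sum_filter]
    apply Finset.sum_congr _ (fun _ _ => rfl)
    ext Q
    simp only [Finset.mem_filter, mem_fines]
    constructor
    · rintro ⟨h1, h2⟩; exact ⟨hTs Q h1, h2⟩
    · rintro ⟨h1, h2⟩; exact ⟨hT i hi p hp (mem_fines.2 ⟨h1, h2⟩), h2⟩
  · intro Q hQ hne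
    by_contra hQT
    apply hne
    rw [sum_coarse_rperp s c g hg Q hQ, Finset.sum_eq_zero, ← mulL_apply, map_zero, smul_zero]
    intro i hi
    rw [List.sum_eq_zero, smul_zero]
    intro x hx
    obtain ⟨p, hp, rfl⟩ := List.mem_map.1 hx
    rw [if_neg]
    intro hr
    exact hQT (hT i hi p hp (mem_fines.2 ⟨hQ, hr⟩))
  · exact hTs

end PartTwo
end ColoredImm

namespace ColoredImm

section PartThree
variable {A : Type*}

lemma BH_snoc (v w : List A) (J : Sentence A) :
    BH v (J ++ [w]) = ∑ t ∈ Finset.range (w.length + 1), ∑ Q2 ∈ refs (w.drop t),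
      ((-1 : ℚ)) ^ Q2.length • mulN (BH (v ++ Q2.reverse.flatten) J) (Hw (w.take t)) := by
  have hR : ∀ t, ∀ Q2 : Sentence A,
      ((-1 : ℚ)) ^ Q2.length • mulN (BH (v ++ Q2.reverse.flatten) J) (Hw (w.take t))
      = ((splitsOf J).map (fun p => ∑ Q ∈ fines (flattenWS p.2), ((-1 : ℚ)) ^ (Q ++ Q2).length •
          mulN (Hw (v ++ (Q ++ Q2).reverse.flatten))
            (Hd (flattenWS (p.1 ++ [w.take t]))))).sum := by
    intro t Q2
    unfold BH
    rw [← mulR_apply, map_list_sum, List.smul_sum, List.map_map, List.map_map]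
    congr 1
    apply List.map_congr_left
    intro p _
    simp only [Function.comp]
    rw [map_sum, Finset.smul_sum]
    apply Finset.sum_congr rfl
    intro Q _
    rw [map_smul, mulR_apply, smul_smul, ← pow_add]
    rw [Hw_eq, Hw_eq, Hw_eq, mulN_Hd_Hd, mulN_Hd_Hd, mulN_Hd_Hd, flattenWS_append]
    simp [List.append_assoc, add_comm]
  simp only [hR]
  unfold BH
  rw [splitsOf_snoc_sum]
  simp only [sum_fines_flattenWS_snoc]
  rw [list_sum_finset_comm]
  apply Finset.sum_congr rfl
  intro t _
  rw [← list_sum_finset_comm]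
  congr 1
  apply List.map_congr_left
  intro p _
  rw [Finset.sum_comm]

lemma mulN_one (f : NSymA A) : mulN f (Hd []) = f := by
  funext I
  simp only [mulN, Hd]
  rw [Finset.sum_eq_single I.length]
  · simp
  · intro j hj hne
    have : ¬ I.drop j = [] := by
      simp only [Finset.mem_range] at hj
      rw [List.drop_eq_nil_iff]; omega
    rw [if_neg this, mul_zero]
  · intro h; exact absurd (by simp) h

lemma BH_snoc_weak (v w : List A) (J : Sentence A) :
    BH v (J ++ flattenWS [w]) = ∑ t ∈ Finset.range (w.length + 1), ∑ Q2 ∈ refs (w.drop t),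
      ((-1 : ℚ)) ^ Q2.length • mulN (BH (v ++ Q2.reverse.flatten) J) (Hw (w.take t)) := by
  by_cases hw : w = []
  · subst hw
    simp [flattenWS, refs_nil, Hw, mulN_one]
  · rw [flattenWS_self (isSentence_singleton.2 hw), BH_snoc]

lemma BH_mul (v w : List A) (J : Sentence A) :
    mulN (BH v J) (Hw w) = ∑ t ∈ Finset.range (w.length + 1),
      BH (v ++ w.drop t) (J ++ flattenWS [w.take t]) := by
  have h1 : ∀ t ∈ Finset.range (w.length + 1),
      BH (v ++ w.drop t) (J ++ flattenWS [w.take t])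
      = ∑ r ∈ Finset.range (t + 1), ∑ Q2 ∈ refs ((w.take t).drop r),
        ((-1 : ℚ)) ^ Q2.length •
          mulN (BH (v ++ w.drop t ++ Q2.reverse.flatten) J) (Hw (w.take r)) := by
    intro t ht
    simp only [Finset.mem_range] at ht
    rw [BH_snoc_weak, List.length_take, min_eq_left (by omega)]
    apply Finset.sum_congr rfl
    intro r hr
    simp only [Finset.mem_range] at hr
    rw [List.take_take, min_eq_left (by omega)]
  rw [Finset.sum_congr rfl h1]
  rw [Finset.sum_comm' (t' := Finset.range (w.length + 1))
    (s' := fun r => Finset.Ico r (w.length + 1))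
    (by intro x y; simp only [Finset.mem_range, Finset.mem_Ico]; omega)]
  rw [Finset.sum_range_succ, Finset.sum_eq_zero]
  · simp [refs_nil]
  · intro r hr
    simp only [Finset.mem_range] at hr
    rw [Finset.sum_Ico_eq_sum_range]
    have h2 := sum_refs_rec (fun x => mulN (BH x J) (Hw (w.take r))) (w.drop r)
      (by rw [Ne, List.drop_eq_nil_iff]; omega) v
    rw [List.length_drop] at h2
    rw [← h2]
    have h3 : w.length + 1 - r = w.length - r + 1 := by omega
    rw [h3]
    apply Finset.sum_congr rfl
    intro i _
    rw [List.drop_take, List.drop_drop]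
    simp

lemma InNSym_sum {ι : Type*} (s : Finset ι) (f : ι → NSymA A) (h : ∀ i ∈ s, InNSym (f i)) :
    InNSym (∑ i ∈ s, f i) := by
  constructor
  · apply Set.Finite.subset (Set.Finite.biUnion s.finite_toSet (fun i hi => (h i hi).1))
    intro I hI
    rw [Function.mem_support, Finset.sum_apply] at hI
    obtain ⟨i, hi, hne⟩ := Finset.exists_ne_zero_of_sum_ne_zero hI
    simp only [Set.mem_iUnion]
    exact ⟨i, hi, hne⟩
  · intro I hI
    rw [Finset.sum_apply] at hI
    obtain ⟨i, hi, hne⟩ := Finset.exists_ne_zero_of_sum_ne_zero hI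
    exact (h i hi).2 I hne

lemma InNSym_smul (c : ℚ) {f : NSymA A} (h : InNSym f) : InNSym (c • f) := by
  constructor
  · apply h.1.subset
    intro I hI h0
    exact hI (by simp [h0])
  · intro I hI
    apply h.2
    intro h0
    exact hI (by simp [h0])

lemma InNSym_add {f g : NSymA A} (hf : InNSym f) (hg : InNSym g) : InNSym (f + g) := by
  constructor
  · apply (hf.1.union hg.1).subset
    intro I hI
    by_contra h
    simp only [Set.mem_union, Function.mem_support, not_or, not_not] at h
    exact hI (by simp [h.1, h.2])
  · intro I hI
    by_cases h : f I = 0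
    · apply hg.2
      intro h2; exact hI (by simp [h, h2])
    · exact hf.2 I h

lemma InNSym_zero : InNSym (0 : NSymA A) := by
  constructor
  · simp
  · intro I hI; simp at hI

lemma InNSym_list_sum (l : List (NSymA A)) (h : ∀ f ∈ l, InNSym f) : InNSym l.sum := by
  induction l with
  | nil => exact InNSym_zero
  | cons f l ih =>
    rw [List.sum_cons]
    exact InNSym_add (h f (by simp)) (ih (fun g hg => h g (by simp [hg])))

lemma InNSym_Hd {I : Sentence A} (h : IsSentence I) : InNSym (Hd I) := by
  constructor
  · apply (Set.finite_singleton I).subset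
    intro J hJ
    by_contra h2
    exact hJ (by simp only [Hd]; rw [if_neg (fun h => h2 (by simp [h]))])
  · intro J hJ
    have : J = I := by
      by_contra h2
      exact hJ (by simp only [Hd]; rw [if_neg h2])
    rw [this]; exact h

lemma InNSym_BH (v : List A) (J : Sentence A) : InNSym (BH v J) := by
  apply InNSym_list_sum
  intro f hf
  obtain ⟨p, -, rfl⟩ := List.mem_map.1 hf
  apply InNSym_sum
  intro Q _
  apply InNSym_smul
  rw [Hw_eq, mulN_Hd_Hd]
  exact InNSym_Hd (isSentence_append.2 ⟨flattenWS_isSentence _, flattenWS_isSentence _⟩)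

lemma InNSym_expand {f : NSymA A} (s : Finset (Sentence A)) (hs : ∀ I, f I ≠ 0 → I ∈ s) :
    f = ∑ I ∈ s, f I • Hd I := by
  classical
  funext K
  rw [Finset.sum_apply]
  simp only [Pi.smul_apply, Hd, smul_eq_mul, mul_ite, mul_one, mul_zero]
  rw [Finset.sum_ite_eq]
  split_ifs with h
  · rfl
  · by_contra h2; exact h (hs K h2)

lemma Bern_expand {f : NSymA A} (s : Finset (Sentence A)) (hs : ∀ I, f I ≠ 0 → I ∈ s)
    (hs2 : ∀ I ∈ s, IsSentence I) (v : List A) : Bern v f = ∑ I ∈ s, f I • BH v I := by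
  conv_lhs => rw [InNSym_expand s hs]
  exact Bern_sum s f id hs2 v

lemma InNSym.exists_finset {f : NSymA A} (hf : InNSym f) :
    ∃ s : Finset (Sentence A), (∀ I, f I ≠ 0 → I ∈ s) ∧ ∀ I ∈ s, IsSentence I :=
  ⟨hf.1.toFinset, fun I hI => by simpa using hI, fun I hI => hf.2 I (by simpa using hI)⟩

lemma InNSym_Bern {f : NSymA A} (hf : InNSym f) (v : List A) : InNSym (Bern v f) := by
  obtain ⟨s, h1, h2⟩ := hf.exists_finset
  rw [Bern_expand s h1 h2]
  apply InNSym_sum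
  intro I _
  exact InNSym_smul _ (InNSym_BH v I)

lemma Bern_add {f g : NSymA A} (hf : InNSym f) (hg : InNSym g) (v : List A) :
    Bern v (f + g) = Bern v f + Bern v g := by
  classical
  obtain ⟨s, h1, h2⟩ := hf.exists_finset
  obtain ⟨s', h1', h2'⟩ := hg.exists_finset
  have hu : ∀ I ∈ s ∪ s', IsSentence I := by
    intro I hI
    rcases Finset.mem_union.1 hI with h | h
    · exact h2 I h
    · exact h2' I h
  have hf1 : ∀ I, f I ≠ 0 → I ∈ s ∪ s' := fun I h => Finset.mem_union_left _ (h1 I h)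
  have hg1 : ∀ I, g I ≠ 0 → I ∈ s ∪ s' := fun I h => Finset.mem_union_right _ (h1' I h)
  rw [Bern_expand (s ∪ s') hf1 hu, Bern_expand (s ∪ s') hg1 hu, Bern_expand (s ∪ s') _ hu,
    ← Finset.sum_add_distrib]
  · apply Finset.sum_congr rfl
    intro I _
    rw [Pi.add_apply, add_smul]
  · intro I hI
    by_cases h : f I = 0
    · apply hg1
      intro h3; exact hI (by simp [h, h3])
    · exact hf1 I h

lemma Bern_zero (v : List A) : Bern v (0 : NSymA A) = 0 := by
  have := Bern_expand (f := (0 : NSymA A)) ∅ (by simp) (by simp) v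
  simpa using this

lemma Bern_list_sum {α : Type*} (l : List α) (f : α → NSymA A) (h : ∀ i ∈ l, InNSym (f i))
    (v : List A) : Bern v (l.map f).sum = (l.map (fun i => Bern v (f i))).sum := by
  induction l with
  | nil => simp [Bern_zero]
  | cons a l ih =>
    have hl : ∀ i ∈ l, InNSym (f i) := fun i hi => h i (by simp [hi])
    rw [List.map_cons, List.sum_cons, Bern_add (h a (by simp)), ih hl, List.map_cons, List.sum_cons]
    apply InNSym_list_sum
    intro g hg
    obtain ⟨i, hi, rfl⟩ := List.mem_map.1 hg
    exact hl i hi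

lemma Bern_mul {f : NSymA A} (hf : InNSym f) (v w : List A) :
    mulN (Bern v f) (Hw w) = ∑ t ∈ Finset.range (w.length + 1),
      Bern (v ++ w.drop t) (mulN f (Hw (w.take t))) := by
  obtain ⟨s, h1, h2⟩ := hf.exists_finset
  have h3 : ∀ x : List A, mulN f (Hw x) = ∑ I ∈ s, f I • Hd (I ++ flattenWS [x]) := by
    intro x
    conv_lhs => rw [InNSym_expand s h1]
    rw [← mulR_apply, map_sum]
    apply Finset.sum_congr rfl
    intro I _
    rw [map_smul, mulR_apply, Hw_eq, mulN_Hd_Hd]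
  rw [Bern_expand s h1 h2, ← mulR_apply, map_sum]
  have h4 : ∀ t ∈ Finset.range (w.length + 1),
      Bern (v ++ w.drop t) (mulN f (Hw (w.take t)))
      = ∑ I ∈ s, f I • BH (v ++ w.drop t) (I ++ flattenWS [w.take t]) := by
    intro t _
    rw [h3]
    apply Bern_sum
    intro I hI
    exact isSentence_append.2 ⟨h2 I hI, flattenWS_isSentence _⟩
  rw [Finset.sum_congr rfl h4, Finset.sum_comm]
  apply Finset.sum_congr rfl
  intro I _
  rw [map_smul, mulR_apply, BH_mul, Finset.smul_sum]

lemma InNSym_ImmS (J : Sentence A) : InNSym (ImmS J) := by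
  induction J with
  | nil => exact InNSym_Hd isSentence_nil
  | cons v J ih => exact InNSym_Bern ih v

/-- Append the letter `x` to row `k` (creating a new last row if necessary). -/
def addAt {α : Type*} : List (List α) → ℕ → α → List (List α)
  | [], _, x => [[x]]
  | l :: ls, 0, x => (l ++ [x]) :: ls
  | l :: ls, k + 1, x => l :: addAt ls k x

/-- Sum of `φ` over all shapes obtained from `K` by inserting the letters of `w` in weakly
decreasing rows, the first row being `< b`. -/
def Dsum {M : Type*} [AddCommMonoid M] (φ : Sentence A → M) : ℕ → Sentence A → List A → M
  | _, K, [] => φ K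
  | b, K, a :: w => ∑ k ∈ (Finset.range (K.length + 1)).filter (fun k => k < b),
      Dsum φ (k + 1) (addAt K k a) w

lemma Dsum_zero_cons {M : Type*} [AddCommMonoid M] (φ : Sentence A → M) (K : Sentence A) (a : A)
    (w : List A) : Dsum φ 0 K (a :: w) = 0 := by
  simp [Dsum]

lemma Dsum_cons_row {M : Type*} [AddCommMonoid M] (w : List A) :
    ∀ (φ : Sentence A → M) (b : ℕ) (v : List A) (K : Sentence A),
    Dsum φ (b + 1) (v :: K) w = ∑ t ∈ Finset.range (w.length + 1),
      Dsum (fun L => φ ((v ++ w.drop t) :: L)) b K (w.take t) := by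
  induction w with
  | nil => intro φ b v K; simp [Dsum]
  | cons a w ih =>
    intro φ b v K
    have hL : Dsum φ (b + 1) (v :: K) (a :: w) = Dsum φ 1 ((v ++ [a]) :: K) w +
        ∑ k ∈ (Finset.range (K.length + 1)).filter (fun k => k < b),
          Dsum φ (k + 1 + 1) (v :: addAt K k a) w := by
      rw [Dsum, List.length_cons, Finset.sum_filter, Finset.sum_range_succ', Finset.sum_filter,
        add_comm]
      simp [addAt]
    rw [hL, List.length_cons, Finset.sum_range_succ', add_comm]
    congr 1
    · simp only [ih]
      rw [Finset.sum_comm]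
      apply Finset.sum_congr rfl
      intro t _
      simp [Dsum]
    · rw [ih φ 0, Finset.sum_range_succ', Finset.sum_eq_zero]
      · simp [Dsum]
      · intro t ht
        simp only [Finset.mem_range] at ht
        cases w with
        | nil => simp at ht
        | cons c w => simp [Dsum_zero_cons]

lemma InNSym_Dsum (φ : Sentence A → NSymA A) (hφ : ∀ J, InNSym (φ J)) (w : List A) :
    ∀ b K, InNSym (Dsum φ b K w) := by
  induction w with
  | nil => intro b K; exact hφ K
  | cons a w ih =>
    intro b K
    apply InNSym_sum
    intro k _
    exact ih _ _

lemma Bern_finset_sum {α : Type*} (s : Finset α) (f : α → NSymA A) (h : ∀ i ∈ s, InNSym (f i))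
    (v : List A) : Bern v (∑ i ∈ s, f i) = ∑ i ∈ s, Bern v (f i) := by
  rw [← Finset.sum_map_toList, Bern_list_sum _ _ (by simpa using h), Finset.sum_map_toList]

lemma Bern_Dsum (φ : Sentence A → NSymA A) (hφ : ∀ J, InNSym (φ J)) (v w : List A) :
    ∀ b K, Bern v (Dsum φ b K w) = Dsum (fun L => Bern v (φ L)) b K w := by
  induction w with
  | nil => intro b K; rfl
  | cons a w ih =>
    intro b K
    simp only [Dsum]
    rw [Bern_finset_sum _ _ (fun k _ => InNSym_Dsum φ hφ w _ _)]
    simp only [ih]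

/-- The right Pieri rule. -/
lemma pieri (K : Sentence A) : ∀ w : List A,
    mulN (ImmS K) (Hw w) = Dsum ImmS (K.length + 1) K w := by
  induction K with
  | nil =>
    intro w
    have h0 : ImmS ([] : Sentence A) = Hd [] := rfl
    rw [h0, Hw_eq, mulN_Hd_Hd]
    cases w with
    | nil => simp [Dsum, flattenWS, h0]
    | cons a w =>
      have h1 : Dsum ImmS (([] : Sentence A).length + 1) [] (a :: w) = Dsum ImmS 1 [[a]] w := by
        simp [Dsum, addAt, Finset.sum_filter]
      rw [h1, Dsum_cons_row, Finset.sum_range_succ', Finset.sum_eq_zero]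
      · simp only [List.take_zero, List.drop_zero, Dsum, zero_add]
        have h2 : ImmS [[a] ++ w] = Bern ([a] ++ w) (Hd []) := rfl
        have h3 : Bern ([a] ++ w) (Hd ([] : Sentence A)) = BH ([a] ++ w) [] := by
          have := Bern_sum (Finset.range 1) (fun _ => (1 : ℚ)) (fun _ => ([] : Sentence A))
            (fun _ _ => isSentence_nil) ([a] ++ w)
          simpa using this
        rw [h2, h3]
        simp [BH, splitsOf, flattenWS, fines_nil, Hw, mulN_one]
      · intro t ht
        simp only [Finset.mem_range] at ht
        cases w with
        | nil => simp at ht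
        | cons c w => simp [Dsum_zero_cons]
  | cons v K ih =>
    intro w
    have h0 : ∀ u : List A, ∀ L, ImmS (u :: L) = Bern u (ImmS L) := fun _ _ => rfl
    rw [h0, Bern_mul (InNSym_ImmS K), List.length_cons, Dsum_cons_row]
    apply Finset.sum_congr rfl
    intro t _
    rw [ih, Bern_Dsum _ InNSym_ImmS]
    rfl

end PartThree
end ColoredImm

namespace ColoredImm
section Part4
variable {A : Type*}

/-- States of the insertion process. -/
abbrev St (A : Type*) := ℕ × Sentence A × Filling

/-- One insertion step. -/
def step (x : A × Bool) (s : St A) : List (St A) :=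
  ((List.range (s.2.1.length + 1)).filter
    (fun k => if x.2 then decide (s.1 ≤ k) else decide (k < s.1))).map
    (fun k => (k + 1, addAt s.2.1 k x.1, addAt s.2.2 k (nBoxes s.2.2 + 1)))

/-- All results of running the insertion process. -/
def runs : St A → List (A × Bool) → List (St A)
  | s, [] => [s]
  | s, x :: l => (step x s).flatMap (fun s' => runs s' l)

lemma runs_append (l l' : List (A × Bool)) : ∀ s : St A,
    runs s (l ++ l') = (runs s l).flatMap (fun s' => runs s' l') := by
  induction l with
  | nil => intro s; simp [runs]
  | cons x l ih =>
    intro s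
    simp only [List.cons_append, runs, List.flatMap_assoc, ih]

/-- Sum of `φ` of the shape over a list of states. -/
def SL {M : Type*} [AddCommMonoid M] (φ : Sentence A → M) (L : List (St A)) : M :=
  (L.map (fun s => φ s.2.1)).sum

lemma SL_flatMap {M β : Type*} [AddCommMonoid M] (φ : Sentence A → M) (L : List β)
    (g : β → List (St A)) : SL φ (L.flatMap g) = (L.map (fun s => SL φ (g s))).sum := by
  induction L with
  | nil => simp [SL]
  | cons a L ih =>
    simp only [SL, List.flatMap_cons, List.map_append, List.sum_append, List.map_cons,
      List.sum_cons] at ih ⊢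
    rw [ih]

lemma range_filter_sum {M : Type*} [AddCommMonoid M] (n : ℕ) (p : ℕ → Bool) (φ : ℕ → M) :
    (((List.range n).filter p).map φ).sum = ∑ k ∈ (Finset.range n).filter (fun k => p k = true), φ k := by
  rw [Finset.sum_filter, ← list_range_sum]
  induction (List.range n) with
  | nil => rfl
  | cons a L ih =>
    by_cases h : p a = true
    · simp [List.filter_cons, h, ih]
    · simp [List.filter_cons, h, ih]

lemma SL_runs_false {M : Type*} [AddCommMonoid M] (φ : Sentence A → M) (w : List A) : ∀ s : St A,
    SL φ (runs s (w.map (fun a => (a, false)))) = Dsum φ s.1 s.2.1 w := by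
  induction w with
  | nil => intro s; simp [runs, SL, Dsum]
  | cons a w ih =>
    intro s
    simp only [List.map_cons, runs, SL_flatMap, ih, Dsum, step, List.map_map, Function.comp_def,
      range_filter_sum]
    simp

lemma SL_runs_true {M : Type*} [AddCommMonoid M] (φ : Sentence A → M) (a : A) (w : List A)
    (s : St A) : SL φ (runs s ((a, true) :: w.map (fun a => (a, false)))) =
      ∑ k ∈ (Finset.range (s.2.1.length + 1)).filter (fun k => ¬ k < s.1),
        Dsum φ (k + 1) (addAt s.2.1 k a) w := by
  simp only [runs, SL_flatMap, SL_runs_false, step, List.map_map, Function.comp_def,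
      range_filter_sum]
  simp

lemma SL_runs_both {M : Type*} [AddCommMonoid M] (φ : Sentence A → M) (a : A) (w : List A)
    (s : St A) : SL φ (runs s ((a, false) :: w.map (fun a => (a, false)))) +
      SL φ (runs s ((a, true) :: w.map (fun a => (a, false)))) =
      Dsum φ (s.2.1.length + 1) s.2.1 (a :: w) := by
  have h := SL_runs_false φ (a :: w) s
  rw [List.map_cons] at h
  rw [h, SL_runs_true]
  simp only [Dsum]
  rw [Finset.sum_filter_add_sum_filter_not]
  apply Finset.sum_congr _ (fun _ _ => rfl)
  ext k; simp

/-- Encoding a sentence as a list of letters flagged with word starts. -/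
def enc1 : List A → List (A × Bool)
  | [] => []
  | a :: w => (a, true) :: w.map (fun a => (a, false))

/-- Encoding a sentence as a list of letters flagged with word starts. -/
def enc (C : Sentence A) : List (A × Bool) := C.flatMap enc1

/-- Initial state. -/
def init0 : St A := (0, [], [])

/-- The candidate for the ribbon function. -/
noncomputable def XX (l : List (A × Bool)) : NSymA A := SL ImmS (runs init0 l)

lemma XX_both (l : List (A × Bool)) (w : List A) (hw : w ≠ []) :
    XX (l ++ w.map (fun a => (a, false))) + XX (l ++ enc1 w) = mulN (XX l) (Hw w) := by
  cases w with
  | nil => exact absurd rfl hw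
  | cons a w =>
    simp only [XX, enc1, List.map_cons, runs_append]
    rw [SL_flatMap, SL_flatMap, ← List.sum_map_add]
    simp only [SL_runs_both, ← pieri]
    rw [← mulR_apply, SL, map_list_sum, List.map_map]
    rfl

lemma XX_false (a : A) (l : List (A × Bool)) : XX ((a, false) :: l) = 0 := by
  simp [XX, runs, step, init0, SL]

lemma enc_snoc (C : Sentence A) (w : List A) : enc (C ++ [w]) = enc C ++ enc1 w := by
  simp [enc]

lemma enc1_append (u w : List A) (hu : u ≠ []) :
    enc1 (u ++ w) = enc1 u ++ w.map (fun a => (a, false)) := by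
  cases u with
  | nil => exact absurd rfl hu
  | cons a u => simp [enc1]

open Classical in
lemma Rib_apply {C : Sentence A} (hC : IsSentence C) (J : Sentence A) :
    Rib C J = if Refines C J then (-1 : ℚ) ^ (C.length - J.length) else 0 := by
  have h := coarse_finite hC
  rw [Rib, finsum_mem_finset_sub _ _ h.toFinset (by intro x hx _; simpa using hx)
    (by intro x hx; simpa using hx)]
  rw [Finset.sum_apply]
  simp only [Pi.smul_apply, Hd, smul_eq_mul, mul_ite, mul_one, mul_zero]
  rw [Finset.sum_ite_eq]
  simp

open Classical in
lemma mulN_Hd_snoc (f : NSymA A) (w x : List A) (I : Sentence A) :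
    mulN f (Hd [w]) (I ++ [x]) = if x = w then f I else 0 := by
  simp only [mulN, Hd]
  rw [Finset.sum_eq_single I.length]
  · simp
  · intro j hj hne
    rw [if_neg, mul_zero]
    intro h
    have := congrArg List.length h
    simp at this hj
    omega
  · intro h; simp at h

lemma mulN_Hd_nil (f : NSymA A) (w : List A) : mulN f (Hd [w]) [] = 0 := by
  simp [mulN, Hd]

lemma Rib_nil : Rib ([] : Sentence A) = Hd [] := by
  funext J
  rw [Rib_apply isSentence_nil]
  simp only [Hd]
  by_cases h : J = []
  · subst h; simp [refines_nil_right]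
  · rw [if_neg h, if_neg]
    intro h2
    have := refines_length h2
    simp at this
    exact h this

lemma Rib_rec (C : Sentence A) (u w : List A) (hC : IsSentence C) (hu : u ≠ []) (hw : w ≠ []) :
    Rib (C ++ [u ++ w]) + Rib (C ++ [u] ++ [w]) = mulN (Rib (C ++ [u])) (Hw w) := by
  have h1 : IsSentence (C ++ [u ++ w]) :=
    isSentence_append.2 ⟨hC, isSentence_singleton.2 (by simp [hu])⟩
  have h2 : IsSentence (C ++ [u]) := isSentence_append.2 ⟨hC, isSentence_singleton.2 hu⟩
  have h3 : IsSentence (C ++ [u] ++ [w]) := isSentence_append.2 ⟨h2, isSentence_singleton.2 hw⟩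
  have hHw : Hw w = Hd [w] := by simp [Hw, hw]
  funext J
  rw [Pi.add_apply, hHw, Rib_apply h1, Rib_apply h3]
  rcases List.eq_nil_or_concat' J with rfl | ⟨J, x, rfl⟩
  · simp [refines_nil_right, mulN_Hd_nil]
  rw [mulN_Hd_snoc, Rib_apply h2]
  have key : Refines (C ++ [u] ++ [w]) (J ++ [x]) ↔
      (x = w ∧ Refines (C ++ [u]) J) ∨ Refines (C ++ [u ++ w]) (J ++ [x]) := by
    constructor
    · intro h
      obtain ⟨C1, C2, e1, e2, e3, e4⟩ := refines_snoc.1 h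
      rcases List.eq_nil_or_concat' C2 with rfl | ⟨C2, y, rfl⟩
      · exact absurd rfl e2
      rw [← List.append_assoc] at e1
      obtain ⟨e5, e6⟩ := List.append_inj' e1 rfl
      have e6 : w = y := by simpa using e6
      subst e6
      rcases List.eq_nil_or_concat' C2 with rfl | ⟨C2, z, rfl⟩
      · left
        simp at e3 e5
        exact ⟨e3.symm, e5 ▸ e4⟩
      · right
        rw [← List.append_assoc] at e5
        obtain ⟨e7, e8⟩ := List.append_inj' e5 rfl
        have e8 : u = z := by simpa using e8
        subst e8
        refine refines_snoc.2 ⟨C1, C2 ++ [u ++ w], by simp [e7], by simp, by simpa using e3, e4⟩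
    · rintro (⟨rfl, h⟩ | h)
      · exact refines_snoc.2 ⟨C ++ [u], [x], rfl, by simp, by simp, h⟩
      · obtain ⟨C1, C2, e1, e2, e3, e4⟩ := refines_snoc.1 h
        rcases List.eq_nil_or_concat' C2 with rfl | ⟨C2, y, rfl⟩
        · exact absurd rfl e2
        rw [← List.append_assoc] at e1
        obtain ⟨e5, e6⟩ := List.append_inj' e1 rfl
        have e6 : u ++ w = y := by simpa using e6
        subst e6
        refine refines_snoc.2 ⟨C1, C2 ++ [u] ++ [w], by simp [e5], by simp, by simpa using e3, e4⟩
  have excl : ¬ ((x = w ∧ Refines (C ++ [u]) J) ∧ Refines (C ++ [u ++ w]) (J ++ [x])) := by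
    rintro ⟨⟨rfl, -⟩, h⟩
    obtain ⟨C1, C2, e1, e2, e3, e4⟩ := refines_snoc.1 h
    rcases List.eq_nil_or_concat' C2 with rfl | ⟨C2, y, rfl⟩
    · exact absurd rfl e2
    rw [← List.append_assoc] at e1
    obtain ⟨e5, e6⟩ := List.append_inj' e1 rfl
    have e6 : u ++ x = y := by simpa using e6
    subst e6
    have := congrArg List.length e3
    simp at this
    have := List.length_pos_of_ne_nil hu
    omega
  by_cases ha : Refines (C ++ [u ++ w]) (J ++ [x])
  · have hb : ¬ (x = w ∧ Refines (C ++ [u]) J) := fun h => excl ⟨h, ha⟩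
    have hl := refines_length ha
    simp only [List.length_append, List.length_singleton] at hl
    rw [if_pos ha, if_pos (key.2 (Or.inr ha)), ← ite_and, if_neg hb]
    simp only [List.length_append, List.length_singleton]
    rw [show C.length + 1 + 1 - (J.length + 1) = C.length + 1 - (J.length + 1) + 1 by omega, pow_succ]
    ring
  · by_cases hb : (x = w ∧ Refines (C ++ [u]) J)
    · rw [if_neg ha, if_pos (key.2 (Or.inl hb)), ← ite_and, if_pos hb]
      simp
    · rw [if_neg ha, if_neg (fun h => (key.1 h).elim hb ha), ← ite_and, if_neg hb]
      simp

lemma Rib_single (w : List A) (hw : w ≠ []) : Rib [w] = Hw w := by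
  have hHw : Hw w = Hd [w] := by simp [Hw, hw]
  funext J
  rw [hHw, Rib_apply (isSentence_singleton.2 hw)]
  simp only [Hd]
  rcases List.eq_nil_or_concat' J with rfl | ⟨J, x, rfl⟩
  · simp [refines_nil_right]
  · have key : Refines [w] (J ++ [x]) ↔ J ++ [x] = [w] := by
      constructor
      · intro h
        have hl := refines_length h
        simp at hl
        subst hl
        have := refines_flatten h
        simpa using this
      · intro h
        rw [h]
        exact ⟨[[w]], by simp, by simp, by simp⟩
    by_cases h : Refines [w] (J ++ [x])
    · rw [if_pos h, if_pos (key.1 h), key.1 h]; simp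
    · rw [if_neg h, if_neg (fun h2 => h (key.2 h2))]

theorem Rib_eq_XX (n : ℕ) : ∀ C : Sentence A, IsSentence C → C.length = n → Rib C = XX (enc C) := by
  induction n with
  | zero =>
    intro C hC hn
    have : C = [] := List.length_eq_zero_iff.1 hn
    subst this
    rw [Rib_nil]
    simp [XX, enc, runs, SL, init0, ImmS]
  | succ n ih =>
    intro C hC hn
    rcases List.eq_nil_or_concat' C with rfl | ⟨C, w, rfl⟩
    · simp at hn
    rw [isSentence_append, isSentence_singleton] at hC
    obtain ⟨hC, hw⟩ := hC
    rcases List.eq_nil_or_concat' C with rfl | ⟨C, u, rfl⟩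
    · have h1 := XX_both ([] : List (A × Bool)) w hw
      have h2 : XX ([] : List (A × Bool)) = Hd [] := by simp [XX, runs, SL, init0, ImmS]
      have h3 : mulN (Hd []) (Hw w) = Hw w := by
        rw [Hw_eq, mulN_Hd_Hd, List.nil_append]
      rw [h2, h3] at h1
      cases w with
      | nil => exact absurd rfl hw
      | cons a w =>
        simp only [List.nil_append, List.map_cons] at h1
        rw [XX_false, zero_add] at h1
        simp only [List.nil_append]
        rw [Rib_single _ (by simp), ← h1]
        simp [enc]
    · have hCu := hC
      rw [isSentence_append, isSentence_singleton] at hC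
      have h1 := Rib_rec C u w hC.1 hC.2 hw
      have i1 := ih (C ++ [u ++ w]) (isSentence_append.2 ⟨hC.1, isSentence_singleton.2 (by simp [hw])⟩)
        (by simpa using hn)
      have i2 := ih (C ++ [u]) hCu (by simpa using hn)
      have h2 := XX_both (enc (C ++ [u])) w hw
      rw [i1, i2, ← h2, enc_snoc, enc1_append _ _ hC.2, ← List.append_assoc, ← enc_snoc] at h1
      rw [enc_snoc (C ++ [u]) w]
      exact add_left_cancel h1

end Part4
end ColoredImm

namespace ColoredImm
section Part5

section addAtLemmas
variable {α : Type*}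

lemma addAt_mid (l1 : List (List α)) (r : List α) (l2 : List (List α)) (x : α) :
    addAt (l1 ++ r :: l2) l1.length x = l1 ++ (r ++ [x]) :: l2 := by
  induction l1 with
  | nil => simp [addAt]
  | cons a l1 ih => simp [addAt, ih]

lemma addAt_end (l : List (List α)) (x : α) : addAt l l.length x = l ++ [[x]] := by
  induction l with
  | nil => simp [addAt]
  | cons a l1 ih => simp [addAt, ih]

lemma addAt_flatten (l : List (List α)) (x : α) : ∀ k,
    (addAt l k x).flatten.Perm (x :: l.flatten) := by
  induction l with
  | nil => intro k; simp [addAt]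
  | cons a l ih =>
    intro k
    cases k with
    | zero =>
      simp only [addAt, List.flatten_cons, List.append_assoc]
      exact List.perm_middle
    | succ k =>
      simp only [addAt, List.flatten_cons]
      exact ((ih k).append_left a).trans List.perm_middle

lemma addAt_sent {l : List (List α)} (h : IsSentence l) (x : α) : ∀ k,
    IsSentence (addAt l k x) := by
  induction l with
  | nil => intro k; simp [addAt, isSentence_singleton]
  | cons a l ih =>
    intro k
    rw [isSentence_cons] at h
    cases k with
    | zero => simp only [addAt, isSentence_cons]; exact ⟨by simp, h.2⟩
    | succ k => simp only [addAt, isSentence_cons]; exact ⟨h.1, ih h.2 k⟩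

lemma addAt_map_length {β : Type*} (f : List (List α)) (x : α) (y : β) : ∀ (J : List (List β)) (k : ℕ),
    f.map List.length = J.map List.length →
    (addAt f k x).map List.length = (addAt J k y).map List.length := by
  induction f with
  | nil =>
    intro J k h
    have : J = [] := by simpa using h.symm
    subst this; simp [addAt]
  | cons a f ih =>
    intro J k h
    cases J with
    | nil => simp at h
    | cons b J =>
      simp only [List.map_cons, List.cons.injEq] at h
      cases k with
      | zero => simp [addAt, h.1, h.2]
      | succ k => simp [addAt, h.1, ih J k h.2]

lemma addAt_inj (l : List (List α)) (x y : α) : ∀ (l' : List (List α)) (k : ℕ), IsSentence l →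
    IsSentence l' → k ≤ l.length → k ≤ l'.length → addAt l k x = addAt l' k y → l = l' := by
  induction l with
  | nil =>
    intro l' k _ h' hk hk' h
    cases l' with
    | nil => rfl
    | cons b l' =>
      have : k = 0 := by simpa using hk
      subst this
      rw [isSentence_cons] at h'
      simp only [addAt, List.cons.injEq] at h
      have e1 := congrArg List.length h.1
      have e2 := List.length_pos_of_ne_nil h'.1
      simp at e1
      simp [e1] at e2
  | cons a l ih =>
    intro l' k hs h' hk hk' h
    cases l' with
    | nil =>
      have : k = 0 := by simpa using hk'
      subst this
      rw [isSentence_cons] at hs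
      simp only [addAt, List.cons.injEq] at h
      have e1 := congrArg List.length h.1
      have e2 := List.length_pos_of_ne_nil hs.1
      simp at e1
      simp [e1] at e2
    | cons b l' =>
      rw [isSentence_cons] at hs h'
      cases k with
      | zero =>
        simp only [addAt, List.cons.injEq] at h
        have := (List.append_inj' h.1 rfl).1
        rw [this, h.2]
      | succ k =>
        simp only [addAt, List.cons.injEq] at h
        rw [h.1, ih l' k hs.2 h'.2 (by simpa using hk) (by simpa using hk') h.2]

lemma addAt_getD (l : List (List α)) (x : α) : ∀ (k r : ℕ), k ≤ l.length →
    (addAt l k x).getD r [] = l.getD r [] ++ (if r = k then [x] else []) := by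
  induction l with
  | nil =>
    intro k r hk
    have : k = 0 := by simpa using hk
    subst this
    cases r <;> simp [addAt]
  | cons a l ih =>
    intro k r hk
    cases k with
    | zero => cases r <;> simp [addAt]
    | succ k =>
      cases r with
      | zero => simp [addAt]
      | succ r =>
        have := ih k r (by simpa using hk)
        simpa [addAt] using this

lemma heads_addAt (f : List (List α)) (x : α) : ∀ k, IsSentence f → k < f.length →
    (addAt f k x).filterMap List.head? = f.filterMap List.head? := by
  induction f with
  | nil => intro k _ h; simp at h
  | cons a f ih =>
    intro k hs hk
    rw [isSentence_cons] at hs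
    cases k with
    | zero =>
      cases a with
      | nil => exact absurd rfl hs.1
      | cons b a => simp [addAt]
    | succ k =>
      simp only [addAt, List.filterMap_cons, ih k hs.2 (by simpa using hk)]

lemma rows_addAt (P : List α → Prop) (f : List (List α)) (x : α) : ∀ k,
    (∀ row ∈ f, P row) → (∀ row ∈ f, P (row ++ [x])) → P [x] → ∀ row ∈ addAt f k x, P row := by
  induction f with
  | nil => intro k _ _ h; simpa [addAt] using h
  | cons a f ih =>
    intro k h1 h2 h3
    simp only [List.mem_cons, forall_eq_or_imp] at h1 h2
    cases k with
    | zero => simp only [addAt, List.mem_cons, forall_eq_or_imp]; exact ⟨h2.1, h1.2⟩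
    | succ k =>
      simp only [addAt, List.mem_cons, forall_eq_or_imp]
      exact ⟨h1.1, ih k h1.2 h2.2 h3⟩

end addAtLemmas

lemma rowOf_addAt_old (f : Filling) (m v : ℕ) (hv : v ≠ m) : ∀ k, v ∈ f.flatten →
    rowOf (addAt f k m) v = rowOf f v := by
  induction f with
  | nil => intro k h; simp at h
  | cons a f ih =>
    intro k h
    cases k with
    | zero =>
      simp only [addAt, rowOf, List.findIdx_cons, List.contains_eq_mem, List.mem_append,
        List.mem_singleton, hv, or_false]
    | succ k =>
      simp only [addAt, rowOf, List.findIdx_cons, List.contains_eq_mem]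
      by_cases hva : v ∈ a
      · simp [hva]
      · have h' : v ∈ f.flatten := by
          rw [List.flatten_cons, List.mem_append] at h
          exact h.resolve_left hva
        have := ih k h'
        simp only [rowOf, List.contains_eq_mem] at this
        rw [this]

lemma rowOf_addAt_new (f : Filling) (m : ℕ) : ∀ k, k ≤ f.length → m ∉ f.flatten →
    rowOf (addAt f k m) m = k := by
  induction f with
  | nil => intro k h _; have : k = 0 := by simpa using h
           subst this; simp [addAt, rowOf]
  | cons a f ih =>
    intro k hk h
    rw [List.flatten_cons, List.mem_append, not_or] at h
    cases k with
    | zero => simp [addAt, rowOf, List.findIdx_cons]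
    | succ k =>
      have := ih k (by simpa using hk) h.2
      simp only [rowOf, List.contains_eq_mem] at this
      simp [addAt, rowOf, List.findIdx_cons, h.1, this]

lemma mem_rowOf (f : Filling) (v : ℕ) (h : v ∈ f.flatten) : v ∈ f.getD (rowOf f v) [] := by
  induction f with
  | nil => simp at h
  | cons a f ih =>
    simp only [rowOf, List.findIdx_cons, List.contains_eq_mem] at ih ⊢
    by_cases hva : v ∈ a
    · simp [hva]
    · rw [List.flatten_cons, List.mem_append] at h
      simpa [hva] using ih (h.resolve_left hva)

variable {A : Type*}

lemma getD_len_eq (f : Filling) : ∀ (J : Sentence A) (r : ℕ), f.map List.length = J.map List.length →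
    (f.getD r []).length = (J.getD r []).length := by
  induction f with
  | nil =>
    intro J r h
    have : J = [] := by simpa using h.symm
    subst this; simp
  | cons a f ih =>
    intro J r h
    cases J with
    | nil => simp at h
    | cons b J =>
      simp only [List.map_cons, List.cons.injEq] at h
      cases r with
      | zero => simpa using h.1
      | succ r => simpa using ih J r h.2

lemma colorOf_old [Inhabited A] (J : Sentence A) (f : Filling) (k m v : ℕ) (a : A)
    (hl : f.map List.length = J.map List.length) (hk : k ≤ f.length) (hv : v ≠ m)
    (hm : v ∈ f.flatten) : colorOf (addAt J k a) (addAt f k m) v = colorOf J f v := by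
  have hlen : f.length = J.length := by simpa using congrArg List.length hl
  unfold colorOf
  rw [rowOf_addAt_old f m v hv k hm, addAt_getD f m k _ hk, addAt_getD J a k _ (hlen ▸ hk)]
  have h1 := mem_rowOf f v hm
  have h2 := getD_len_eq f J (rowOf f v) hl
  generalize f.getD (rowOf f v) [] = R at *
  generalize J.getD (rowOf f v) [] = W at *
  have h3 : R.findIdx (fun x => x == v) < R.length := by
    apply List.findIdx_lt_length_of_exists
    exact ⟨v, h1, by simp⟩
  have h4 : (R ++ if rowOf f v = k then [m] else []).findIdx (fun x => x == v) =
      R.findIdx (fun x => x == v) := by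
    rw [List.findIdx_append, if_pos h3]
  rw [h4, List.getD_append]
  omega

lemma colorOf_new [Inhabited A] (J : Sentence A) (f : Filling) (k m : ℕ) (a : A)
    (hl : f.map List.length = J.map List.length) (hk : k ≤ f.length)
    (hm : m ∉ f.flatten) : colorOf (addAt J k a) (addAt f k m) m = a := by
  have hlen : f.length = J.length := by simpa using congrArg List.length hl
  unfold colorOf
  rw [rowOf_addAt_new f m k hk hm, addAt_getD f m k _ hk, addAt_getD J a k _ (hlen ▸ hk)]
  have h2 := getD_len_eq f J k hl
  have h1 : m ∉ f.getD k [] := by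
    intro h
    apply hm
    by_cases hkl : k < f.length
    · rw [List.getD_eq_getElem _ _ hkl] at h
      exact List.mem_flatten.2 ⟨_, List.getElem_mem hkl, h⟩
    · rw [List.getD_eq_default _ _ (by omega)] at h
      simp at h
  generalize f.getD k [] = R at *
  generalize J.getD k [] = W at *
  simp only [if_true]
  have h3 : R.findIdx (fun x => x == m) = R.length := by
    rw [List.findIdx_eq_length]
    intro x hx
    simp only [beq_eq_false_iff_ne]
    rintro rfl; exact h1 hx
  rw [List.findIdx_append, if_neg (by omega)]
  simp [h2]

/-- Standard colored immaculate tableaux. -/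
structure Good (J : Sentence A) (f : Filling) : Prop where
  sent : IsSentence J
  len : f.map List.length = J.map List.length
  rows : ∀ row ∈ f, row.Pairwise (· ≤ ·)
  heads : (f.filterMap List.head?).Pairwise (· < ·)
  std : IsStandardF f

lemma Good.mem {J : Sentence A} {f : Filling} (h : Good J f) (v : ℕ) :
    v ∈ f.flatten ↔ 1 ≤ v ∧ v ≤ nBoxes f := by
  have := h.std
  unfold IsStandardF at this
  rw [this.mem_iff, List.mem_range'_1]
  omega

lemma good_iff {J : Sentence A} {f : Filling} : Good J f ↔ IsSentence J ∧ IsCIT J f ∧ IsStandardF f := by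
  constructor
  · intro h
    refine ⟨h.sent, ⟨h.len, fun r hr => ?_, ?_, fun x hx => ((h.mem x).1 hx).1⟩, h.std⟩
    · exact List.isChain_iff_pairwise.2 (h.rows r hr)
    · exact List.isChain_iff_pairwise.2 h.heads
  · rintro ⟨h1, ⟨h2, h3, h4, h5⟩, h6⟩
    exact ⟨h1, h2, fun r hr => List.isChain_iff_pairwise.1 (h3 r hr), List.isChain_iff_pairwise.1 h4, h6⟩

lemma Good.fsent {J : Sentence A} {f : Filling} (h : Good J f) : IsSentence f := by
  intro r hr hn
  have : r.length ∈ f.map List.length := List.mem_map_of_mem hr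
  rw [h.len, List.mem_map] at this
  obtain ⟨w, hw, hl⟩ := this
  apply h.sent w hw
  rw [hn] at hl
  exact List.length_eq_zero_iff.1 hl

lemma Good.flen {J : Sentence A} {f : Filling} (h : Good J f) : f.length = J.length := by
  simpa using congrArg List.length h.len

lemma nBoxes_addAt (f : Filling) (k m : ℕ) : nBoxes (addAt f k m) = nBoxes f + 1 := by
  unfold nBoxes
  rw [(addAt_flatten f m k).length_eq]; simp

lemma Good.add {J : Sentence A} {f : Filling} (h : Good J f) (k : ℕ) (a : A) (hk : k ≤ J.length) :
    Good (addAt J k a) (addAt f k (nBoxes f + 1)) := by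
  have hle : ∀ r ∈ f, ∀ x ∈ r, x ≤ nBoxes f := fun r hr x hx =>
    ((h.mem x).1 (List.mem_flatten.2 ⟨r, hr, hx⟩)).2
  refine ⟨addAt_sent h.sent a k, addAt_map_length f _ a J k h.len, ?_, ?_, ?_⟩
  · apply rows_addAt
    · exact h.rows
    · intro r hr
      rw [List.pairwise_append]
      refine ⟨h.rows r hr, by simp, ?_⟩
      intro x hx y hy
      have := hle r hr x hx
      simp at hy; omega
    · simp
  · rcases Nat.lt_or_ge k f.length with h1 | h1
    · rw [heads_addAt _ _ _ h.fsent h1]; exact h.heads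
    · have : k = f.length := by have := h.flen; omega
      rw [this, addAt_end, List.filterMap_append, List.pairwise_append]
      refine ⟨h.heads, by simp, ?_⟩
      intro x hx y hy
      rw [List.mem_filterMap] at hx
      obtain ⟨r, hr, hx⟩ := hx
      have := hle r hr x (List.mem_of_head? hx)
      simp at hy; omega
  · unfold IsStandardF
    rw [nBoxes_addAt, List.range'_concat]
    refine (addAt_flatten f _ k).trans ?_
    refine (h.std.cons _).trans ?_
    rw [Nat.one_mul, Nat.add_comm 1]
    exact (List.perm_append_singleton _ _).symm

lemma std_remove (f f' : Filling) (k : ℕ) (hf : f = addAt f' k (nBoxes f)) (h : IsStandardF f) :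
    nBoxes f = nBoxes f' + 1 ∧ IsStandardF f' := by
  have h1 : nBoxes f = nBoxes f' + 1 := by
    conv_lhs => rw [hf]
    rw [nBoxes_addAt]
  refine ⟨h1, ?_⟩
  unfold IsStandardF at h ⊢
  have h2 := addAt_flatten f' (nBoxes f) k
  rw [← hf] at h2
  have h3 := h2.symm.trans h
  rw [h1, List.range'_concat, Nat.one_mul, Nat.add_comm 1] at h3
  exact (h3.trans (List.perm_append_singleton _ _)).cons_inv

lemma Good.remove {J : Sentence A} {f : Filling} (h : Good J f) (hn : nBoxes f ≠ 0) :
    ∃ J' f' k a, Good J' f' ∧ k ≤ J'.length ∧ J = addAt J' k a ∧ f = addAt f' k (nBoxes f' + 1) := by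
  have hm : nBoxes f ∈ f.flatten := (h.mem _).2 ⟨by omega, le_rfl⟩
  have hnd : f.flatten.Nodup := by
    have := h.std
    unfold IsStandardF at this
    exact this.nodup_iff.2 List.nodup_range'
  have hmax : ∀ x ∈ f.flatten, x ≤ nBoxes f := fun x hx => ((h.mem x).1 hx).2
  obtain ⟨row, hrow, hm⟩ := List.mem_flatten.1 hm
  obtain ⟨f1, f2, hf⟩ := List.append_of_mem hrow
  obtain ⟨r1, r2, hr⟩ := List.append_of_mem hm
  have hN : ∃ N, N = nBoxes f := ⟨_, rfl⟩
  obtain ⟨N, hN⟩ := hN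
  rw [← hN] at hr hmax hn
  have hr2 : r2 = [] := by
    cases r2 with
    | nil => rfl
    | cons y r2 =>
      exfalso
      have hp := h.rows row hrow
      rw [hr, List.pairwise_append] at hp
      have h1 := hp.2.1
      rw [List.pairwise_cons] at h1
      have h2 := h1.1 y (by simp)
      have h3 := hmax y (List.mem_flatten.2 ⟨row, hrow, by simp [hr]⟩)
      have h4 : y = N := by omega
      have h5 : row.Nodup := (List.nodup_flatten.1 hnd).1 row hrow
      rw [hr, h4] at h5
      simp [List.nodup_append] at h5
  subst hr2
  have hlen := h.len
  rw [hf, List.map_append, List.map_cons] at hlen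
  obtain ⟨J1, J2', hJ, hJ1, hJ2o⟩ := List.map_eq_append_iff.1 hlen.symm
  obtain ⟨w, J2, hJ2', hw, hJ2⟩ := List.map_eq_cons_iff.1 hJ2o
  have hwne : w ≠ [] := h.sent w (by rw [hJ, hJ2']; simp)
  obtain ⟨w1, a, rfl⟩ := (List.eq_nil_or_concat' w).resolve_left hwne
  subst hJ2'
  have hl1 : f1.length = J1.length := by simpa using (congrArg List.length hJ1).symm
  have hw1 : w1.length = r1.length := by rw [hr] at hw; simpa using hw
  by_cases hr1 : r1 = []
  · -- the entry starts a new row, which has to be the last one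
    subst hr1
    have hf2 : f2 = [] := by
      cases f2 with
      | nil => rfl
      | cons r f2 =>
        exfalso
        have hrne : r ≠ [] := h.fsent r (by rw [hf]; simp)
        cases r with
        | nil => exact hrne rfl
        | cons y r =>
          have hh := h.heads
          rw [hf, hr] at hh
          simp only [List.filterMap_append, List.pairwise_append] at hh
          have h1 := hh.2.1
          simp at h1
          have h3 := hmax y (List.mem_flatten.2 ⟨y :: r, by rw [hf]; simp, by simp⟩)
          have := h1.1.1
          omega
    subst hf2
    have hJ2n : J2 = [] := by simpa using hJ2
    have hw1n : w1 = [] := by simpa using hw1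
    subst hJ2n; subst hw1n
    have hfe : f = addAt f1 f1.length N := by rw [addAt_end, hf, hr]; rfl
    obtain ⟨s1, s2⟩ := std_remove f f1 f1.length (hN ▸ hfe) h.std
    refine ⟨J1, f1, f1.length, a, ⟨?_, hJ1.symm, ?_, ?_, s2⟩, by omega, ?_, ?_⟩
    · intro v hv; exact h.sent v (by rw [hJ]; simp [hv])
    · intro v hv; exact h.rows v (by rw [hf]; simp [hv])
    · have := h.heads
      rw [hf, List.filterMap_append, List.pairwise_append] at this
      exact this.1
    · rw [hl1, addAt_end, hJ]; rfl
    · rw [← s1, ← hN]; exact hfe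
  · have hfe : f = addAt (f1 ++ r1 :: f2) f1.length N := by rw [addAt_mid, hf, hr]
    obtain ⟨s1, s2⟩ := std_remove f (f1 ++ r1 :: f2) f1.length (hN ▸ hfe) h.std
    refine ⟨J1 ++ w1 :: J2, f1 ++ r1 :: f2, f1.length, a, ⟨?_, ?_, ?_, ?_, s2⟩, ?_, ?_, ?_⟩
    · intro v hv
      rw [List.mem_append, List.mem_cons] at hv
      rcases hv with hv | rfl | hv
      · exact h.sent v (by rw [hJ]; simp [hv])
      · intro hv; rw [hv] at hw1; exact hr1 (List.length_eq_zero_iff.1 hw1.symm)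
      · exact h.sent v (by rw [hJ]; simp [hv])
    · simp [hJ1, hJ2, hw1]
    · intro v hv
      rw [List.mem_append, List.mem_cons] at hv
      rcases hv with hv | rfl | hv
      · exact h.rows v (by rw [hf]; simp [hv])
      · have := h.rows row hrow
        rw [hr, List.pairwise_append] at this
        exact this.1
      · exact h.rows v (by rw [hf]; simp [hv])
    · have := h.heads
      rw [hf, hr] at this
      cases r1 with
      | nil => exact absurd rfl hr1
      | cons y r1 => simpa using this
    · simp; omega
    · rw [hl1, addAt_mid, hJ]
    · rw [← s1, ← hN]; exact hfe

end Part5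
end ColoredImm

namespace ColoredImm
section Part6
variable {A : Type*}

/-- Composition with explicit starting point. -/
def cf (x : ℕ) (ds : List ℕ) (n : ℕ) : List ℕ :=
  List.zipWith (fun a b => b - a) (x :: ds) (ds ++ [n])

lemma cf_nil (x n : ℕ) : cf x [] n = [n - x] := rfl
lemma cf_cons (x d : ℕ) (ds : List ℕ) (n : ℕ) : cf x (d :: ds) n = (d - x) :: cf d ds n := rfl

lemma enc_cons (w : List A) (C : Sentence A) : enc (w :: C) = enc1 w ++ enc C := by simp [enc]

lemma split_ext (n : ℕ) (a : A) (ds : List ℕ) : ∀ (x : ℕ) (w : List A), x < n →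
    (x :: ds).Pairwise (· < ·) → (∀ d ∈ ds, d < n) → w.length = n - x →
    IsSentence (splitByComp w (cf x ds n)) ∧
    splitByComp (w ++ [a]) (cf x (ds ++ [n]) (n + 1)) = splitByComp w (cf x ds n) ++ [[a]] ∧
    IsSentence (splitByComp (w ++ [a]) (cf x ds (n + 1))) ∧
    enc (splitByComp (w ++ [a]) (cf x ds (n + 1))) = enc (splitByComp w (cf x ds n)) ++ [(a, false)] := by
  induction ds with
  | nil =>
    intro x w hx _ _ hw
    have hne : w ≠ [] := by
      rintro rfl; simp at hw; omega
    have e1 : w.take (n - x) = w := by rw [← hw]; simp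
    have e2 : (w ++ [a]).take (n + 1 - x) = w ++ [a] := by
      apply List.take_of_length_le; simp; omega
    have e3 : (w ++ [a]).take (n - x) = w := by rw [← hw]; simp
    have e4 : (w ++ [a]).drop (n - x) = [a] := by rw [← hw]; simp
    simp only [List.nil_append, cf_nil, cf_cons, splitByComp, e1, e2, e3, e4]
    refine ⟨isSentence_singleton.2 hne, by simp, isSentence_singleton.2 (by simp), ?_⟩
    simp [enc, enc1_append _ _ hne]
  | cons d ds ih =>
    intro x w hx hp hd hw
    rw [List.pairwise_cons] at hp
    have hxd := hp.1 d (by simp)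
    have hdn := hd d (by simp)
    obtain ⟨i1, i2, i3, i4⟩ := ih d (w.drop (d - x)) hdn hp.2 (fun y hy => hd y (by simp [hy]))
      (by simp; omega)
    have e1 : (w ++ [a]).take (d - x) = w.take (d - x) := by
      apply List.take_append_of_le_length; omega
    have e2 : (w ++ [a]).drop (d - x) = w.drop (d - x) ++ [a] := by
      apply List.drop_append_of_le_length; omega
    have hne : w.take (d - x) ≠ [] := by
      intro h
      have := congrArg List.length h
      rw [List.length_take, List.length_nil] at this
      omega
    simp only [List.cons_append, cf_cons, splitByComp, e1, e2, i2, enc_cons, i4, isSentence_cons]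
    exact ⟨⟨hne, i1⟩, trivial, ⟨hne, i3⟩, by simp⟩

/-- The bound of a tableau: one more than the row of its largest entry. -/
def bOf (f : Filling) : ℕ := if nBoxes f = 0 then 0 else rowOf f (nBoxes f) + 1

lemma bOf_add {J : Sentence A} {f : Filling} (h : Good J f) (k : ℕ) (hk : k ≤ J.length) :
    bOf (addAt f k (nBoxes f + 1)) = k + 1 := by
  unfold bOf
  rw [nBoxes_addAt, if_neg (by omega), rowOf_addAt_new]
  · rw [h.flen]; exact hk
  · rw [h.mem]; omega

lemma readWord_add [Inhabited A] {J : Sentence A} {f : Filling} (h : Good J f) (k : ℕ) (a : A)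
    (hk : k ≤ J.length) :
    readWord (addAt J k a) (addAt f k (nBoxes f + 1)) = readWord J f ++ [a] := by
  unfold readWord
  rw [nBoxes_addAt, List.range_succ, List.map_append, List.map_singleton,
    colorOf_new J f k _ a h.len (by rw [h.flen]; exact hk) (by rw [h.mem]; omega)]
  congr 1
  apply List.map_congr_left
  intro i hi
  rw [List.mem_range] at hi
  exact colorOf_old J f k _ _ a h.len (by rw [h.flen]; exact hk) (by omega) ((h.mem _).2 (by omega))

lemma descList_add {J : Sentence A} {f : Filling} (h : Good J f) (k : ℕ)
    (hk : k ≤ J.length) (hn : nBoxes f ≠ 0) :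
    descList (addAt f k (nBoxes f + 1)) = descList f ++ if bOf f ≤ k then [nBoxes f] else [] := by
  unfold descList
  rw [nBoxes_addAt]
  have e : List.range' 1 (nBoxes f + 1 - 1) = List.range' 1 (nBoxes f - 1) ++ [nBoxes f] := by
    obtain ⟨n, hn⟩ := Nat.exists_eq_succ_of_ne_zero hn
    rw [hn]
    simp only [Nat.succ_eq_add_one, Nat.add_sub_cancel]
    rw [List.range'_concat, Nat.one_mul, Nat.add_comm 1]
  rw [e, List.filter_append]
  congr 1
  · apply List.filter_congr
    intro i hi
    rw [List.mem_range'_1] at hi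
    rw [rowOf_addAt_old f _ i (by omega) k ((h.mem _).2 (by omega)),
      rowOf_addAt_old f _ (i + 1) (by omega) k ((h.mem _).2 (by omega))]
  · rw [List.filter_singleton, rowOf_addAt_new f _ k (by rw [h.flen]; exact hk) (by rw [h.mem]; omega),
      rowOf_addAt_old f _ _ (by omega) k ((h.mem _).2 (by omega))]
    simp only [bOf, if_neg hn, Nat.succ_le_iff]
    by_cases hlt : rowOf f (nBoxes f) < k <;> simp [hlt]

lemma coA_add [Inhabited A] {J : Sentence A} {f : Filling} (h : Good J f) (k : ℕ) (a : A)
    (hk : k ≤ J.length) (hs : IsSentence (coA J f)) :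
    IsSentence (coA (addAt J k a) (addAt f k (nBoxes f + 1))) ∧
    enc (coA (addAt J k a) (addAt f k (nBoxes f + 1))) = enc (coA J f) ++ [(a, decide (bOf f ≤ k))] := by
  by_cases hn : nBoxes f = 0
  · have hr : readWord J f = [] := by simp [readWord, hn]
    have e : coA (addAt J k a) (addAt f k (nBoxes f + 1)) = [[a]] := by
      unfold coA
      rw [readWord_add h k a hk, nBoxes_addAt, if_neg (by omega), hr]
      have : descList (addAt f k (nBoxes f + 1)) = [] := by
        simp [descList, nBoxes_addAt, hn]
      rw [this, hn]
      simp [compOf, splitByComp]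
    rw [e]
    simp [isSentence_singleton, enc, enc1, coA, hn, bOf]
  · have hlen : (readWord J f).length = nBoxes f - 0 := by simp [readWord]
    have hp : (0 :: descList f).Pairwise (· < ·) := by
      rw [List.pairwise_cons]
      constructor
      · intro d hd
        have := List.mem_of_mem_filter hd
        rw [List.mem_range'_1] at this
        omega
      · exact List.Pairwise.filter _ List.pairwise_lt_range'
    have hd : ∀ d ∈ descList f, d < nBoxes f := by
      intro d hd
      have := List.mem_of_mem_filter hd
      rw [List.mem_range'_1] at this
      omega
    obtain ⟨h1, h2, h3, h4⟩ := split_ext (nBoxes f) a (descList f) 0 (readWord J f) (by omega) hp hd hlen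
    unfold coA
    rw [readWord_add h k a hk, nBoxes_addAt, if_neg (by omega), if_neg hn, descList_add h k hk hn]
    change IsSentence (splitByComp _ (cf 0 _ _)) ∧ enc (splitByComp _ (cf 0 _ _)) =
      enc (splitByComp _ (cf 0 _ _)) ++ _
    by_cases hb : bOf f ≤ k
    · rw [if_pos hb, h2, isSentence_append, isSentence_singleton]
      refine ⟨⟨h1, by simp⟩, ?_⟩
      rw [enc_snoc]
      simp [enc1, hb]
    · rw [if_neg hb, List.append_nil, h4]
      exact ⟨h3, by simp [hb]⟩

lemma Good.eq_nil {J : Sentence A} {f : Filling} (h : Good J f) (hn : nBoxes f = 0) : J = [] ∧ f = [] := by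
  have : f = [] := sentence_flatten_eq_nil h.fsent (List.length_eq_zero_iff.1 hn)
  subst this
  refine ⟨?_, rfl⟩
  have := h.len
  simpa using this.symm

lemma good_nil : Good ([] : Sentence A) [] :=
  ⟨isSentence_nil, rfl, by simp, by simp, by simp [IsStandardF, nBoxes]⟩

lemma Good.coA_sent [Inhabited A] (n : ℕ) : ∀ {J : Sentence A} {f : Filling}, Good J f → nBoxes f = n →
    IsSentence (coA J f) := by
  induction n with
  | zero => intro J f h hn; simp [coA, hn, isSentence_nil]
  | succ n ih =>
    intro J f h hn
    obtain ⟨J', f', k, a, h', hk, rfl, rfl⟩ := h.remove (by omega)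
    rw [nBoxes_addAt] at hn
    exact (coA_add h' k a hk (ih h' (by omega))).1

lemma enc_eq_nil {C : Sentence A} (h : IsSentence C) (he : enc C = []) : C = [] := by
  cases C with
  | nil => rfl
  | cons w C =>
    rw [isSentence_cons] at h
    cases w with
    | nil => exact absurd rfl h.1
    | cons a w => simp [enc, enc1] at he

lemma enc_map_fst (C : Sentence A) : (enc C).map Prod.fst = C.flatten := by
  induction C with
  | nil => rfl
  | cons w C ih =>
    rw [enc_cons, List.map_append, ih, List.flatten_cons]
    cases w with
    | nil => rfl
    | cons a w => simp [enc1, Function.comp_def]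

lemma mem_step {x : A × Bool} {s t : St A} : t ∈ step x s ↔ ∃ k, k ≤ s.2.1.length ∧
    x.2 = decide (s.1 ≤ k) ∧ t = (k + 1, addAt s.2.1 k x.1, addAt s.2.2 k (nBoxes s.2.2 + 1)) := by
  obtain ⟨a, d⟩ := x
  simp only [step, List.mem_map, List.mem_filter, List.mem_range, Nat.lt_succ_iff]
  constructor
  · rintro ⟨k, ⟨h1, h2⟩, rfl⟩
    refine ⟨k, h1, ?_, rfl⟩
    cases d <;> simp_all
  · rintro ⟨k, h1, h2, rfl⟩
    refine ⟨k, ⟨h1, ?_⟩, rfl⟩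
    cases d <;> simp_all

lemma runs_snoc (s : St A) (l : List (A × Bool)) (x : A × Bool) :
    runs s (l ++ [x]) = (runs s l).flatMap (step x) := by
  rw [runs_append]
  simp [runs]

lemma mem_runs [Inhabited A] (l : List (A × Bool)) : ∀ s : St A, s ∈ runs init0 l ↔
    Good s.2.1 s.2.2 ∧ s.1 = bOf s.2.2 ∧ enc (coA s.2.1 s.2.2) = l := by
  induction l using List.reverseRecOn with
  | nil =>
    rintro ⟨b, J, f⟩
    simp only [runs, List.mem_singleton, init0, Prod.mk.injEq]
    constructor
    · rintro ⟨rfl, rfl, rfl⟩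
      exact ⟨good_nil, rfl, rfl⟩
    · rintro ⟨h, hb, he⟩
      have h1 := enc_eq_nil (h.coA_sent _ rfl) he
      by_cases hn : nBoxes f = 0
      · obtain ⟨rfl, rfl⟩ := h.eq_nil hn
        exact ⟨hb, rfl, rfl⟩
      · exfalso
        rw [coA, if_neg hn] at h1
        unfold compOf at h1
        cases hd : descList f <;> simp [hd, splitByComp] at h1
  | append_singleton l x ih =>
    rintro ⟨b, J, f⟩
    obtain ⟨a, d⟩ := x
    rw [runs_snoc, List.mem_flatMap]
    constructor
    · rintro ⟨s, hs, ht⟩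
      rw [ih] at hs
      obtain ⟨h1, h2, h3⟩ := hs
      rw [mem_step] at ht
      obtain ⟨k, hk, hd, he⟩ := ht
      simp only [Prod.mk.injEq] at he
      obtain ⟨rfl, rfl, rfl⟩ := he
      refine ⟨h1.add k a hk, (bOf_add h1 k hk).symm, ?_⟩
      rw [(coA_add h1 k a hk (h1.coA_sent _ rfl)).2, h3]
      simp only at hd
      rw [hd, h2]
    · rintro ⟨h, hb, he⟩
      have hn : nBoxes f ≠ 0 := by
        intro hn
        simp [coA, hn, enc] at he
      obtain ⟨J', f', k, a', h', hk, rfl, rfl⟩ := h.remove hn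
      simp only at hb he
      rw [(coA_add h' k a' hk (h'.coA_sent _ rfl)).2] at he
      obtain ⟨e1, e2⟩ := List.append_inj' he rfl
      simp only [List.cons.injEq, Prod.mk.injEq, and_true] at e2
      obtain ⟨rfl, rfl⟩ := e2
      refine ⟨(bOf f', J', f'), (ih _).2 ⟨h', rfl, e1⟩, ?_⟩
      rw [mem_step]
      refine ⟨k, hk, rfl, ?_⟩
      rw [hb, bOf_add h' k hk]

lemma runs_nodup [Inhabited A] (l : List (A × Bool)) : (runs (init0 : St A) l).Nodup := by
  induction l using List.reverseRecOn with
  | nil => simp [runs]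
  | append_singleton l x ih =>
    rw [runs_snoc, List.nodup_flatMap]
    constructor
    · intro s _
      apply List.Nodup.map
      · intro k k' hkk
        simpa using congrArg Prod.fst hkk
      · exact List.nodup_range.filter _
    · apply List.Nodup.pairwise_of_forall_ne ih
      intro s hs t ht hne
      intro u hu1 hu2
      apply hne
      rw [mem_runs] at hs ht
      rw [mem_step] at hu1 hu2
      obtain ⟨k, hk, -, rfl⟩ := hu1
      obtain ⟨k', hk', -, he⟩ := hu2
      simp only [Prod.mk.injEq, Nat.add_right_cancel_iff] at he
      obtain ⟨rfl, e1, e2⟩ := he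
      have hJ := addAt_inj _ _ _ _ _ hs.1.sent ht.1.sent hk hk' e1
      have hf := addAt_inj _ _ _ _ _ hs.1.fsent ht.1.fsent (by rw [hs.1.flen]; exact hk)
        (by rw [ht.1.flen]; exact hk') e2
      have hb : s.1 = t.1 := by rw [hs.2.1, ht.2.1, hf]
      exact Prod.ext hb (Prod.ext hJ hf)

lemma enc_inj_snoc (C : Sentence A) : ∀ D : Sentence A, IsSentence C → IsSentence D → enc C = enc D →
    C = D := by
  induction C with
  | nil => intro D _ hD h; exact (enc_eq_nil hD h.symm).symm
  | cons w C ih =>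
    intro D hC hD h
    cases D with
    | nil => exact enc_eq_nil hC h
    | cons v D =>
      rw [isSentence_cons] at hC hD
      rw [enc_cons, enc_cons] at h
      have hst : ∀ E : Sentence A, IsSentence E → ∀ y ∈ (enc E).head?, y.2 = true := by
        intro E hE y hy
        cases E with
        | nil => simp [enc] at hy
        | cons e E =>
          rw [isSentence_cons] at hE
          cases e with
          | nil => exact absurd rfl hE.1
          | cons b e => simp [enc, enc1] at hy; rw [← hy]
      have aux : ∀ (w v : List A) (l m : List (A × Bool)), (∀ y ∈ l.head?, y.2 = true) →
          (∀ y ∈ m.head?, y.2 = true) →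
          w.map (fun a => (a, false)) ++ l = v.map (fun a => (a, false)) ++ m → w = v ∧ l = m := by
        intro w
        induction w with
        | nil =>
          intro v l m hl hm h
          cases v with
          | nil => exact ⟨rfl, by simpa using h⟩
          | cons b v =>
            simp at h
            subst h
            simp at hl
        | cons c w ihw =>
          intro v l m hl hm h
          cases v with
          | nil =>
            simp at h
            subst h
            simp at hm
          | cons b v =>
            simp only [List.map_cons, List.cons_append, List.cons.injEq, Prod.mk.injEq, and_true] at h
            obtain ⟨e1, e2⟩ := ihw v l m hl hm h.2
            exact ⟨by rw [h.1, e1], e2⟩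
      cases w with
      | nil => exact absurd rfl hC.1
      | cons c w =>
        cases v with
        | nil => exact absurd rfl hD.1
        | cons b v =>
          simp only [enc1, List.cons_append, List.cons.injEq, Prod.mk.injEq, and_true] at h
          obtain ⟨e1, e2⟩ := aux w v _ _ (hst C hC.2) (hst D hD.2) h.2
          rw [h.1, e1, ih D hC.2 hD.2 e2]

lemma size_eq (I : Sentence A) : size I = I.flatten.length := by
  simp [size, List.length_flatten]

lemma runs_size (l : List (A × Bool)) : ∀ s ∈ runs (init0 : St A) l, size s.2.1 = l.length := by
  induction l using List.reverseRecOn with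
  | nil => intro s hs; simp [runs, init0] at hs; subst hs; simp [size]
  | append_singleton l x ih =>
    intro s hs
    rw [runs_snoc, List.mem_flatMap] at hs
    obtain ⟨t, ht, hs⟩ := hs
    rw [mem_step] at hs
    obtain ⟨k, -, -, rfl⟩ := hs
    have := ih t ht
    rw [size_eq] at this ⊢
    simp only
    rw [(addAt_flatten _ _ _).length_eq]
    simp [this]

theorem main15 [Inhabited A] (C : Sentence A) (hC : IsSentence C) :
    Rib C =
      ∑ᶠ J ∈ {J : Sentence A | IsSentence J ∧ size J = size C}, (LJC J C : ℚ) • ImmS J := by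
  classical
  rw [Rib_eq_XX _ C hC rfl, XX, SL]
  have hmem : ∀ s : St A, s ∈ runs init0 (enc C) ↔ IsSentence s.2.1 ∧ s.1 = bOf s.2.2 ∧
      (IsCIT s.2.1 s.2.2 ∧ IsStandardF s.2.2 ∧ coA s.2.1 s.2.2 = C) := by
    intro s
    rw [mem_runs]
    constructor
    · rintro ⟨h1, h2, h3⟩
      have := enc_inj_snoc _ _ (h1.coA_sent _ rfl) hC h3
      rw [good_iff] at h1
      exact ⟨h1.1, h2, h1.2.1, h1.2.2, this⟩
    · rintro ⟨h1, h2, h3, h4, h5⟩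
      exact ⟨good_iff.2 ⟨h1, h3, h4⟩, h2, by rw [h5]⟩
  set T : Finset (St A) := (runs init0 (enc C)).toFinset with hT
  have hL : ∀ J : Sentence A, IsSentence J → LJC J C = (T.filter (fun s => s.2.1 = J)).card := by
    intro J hJ
    rw [LJC, ← Set.ncard_coe_finset]
    symm
    apply Set.ncard_congr (fun s _ => s.2.2)
    · rintro ⟨b, J', f⟩ hs
      simp only [Finset.coe_filter, hT, List.mem_toFinset, hmem, Set.mem_setOf_eq] at hs ⊢
      obtain ⟨⟨-, -, h⟩, rfl⟩ := hs
      exact h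
    · rintro ⟨b, J', f⟩ ⟨b2, J2, f2⟩ hs ht he
      simp only [Finset.coe_filter, hT, List.mem_toFinset, hmem, Set.mem_setOf_eq] at hs ht he
      obtain ⟨⟨-, h1, -⟩, rfl⟩ := hs
      obtain ⟨⟨-, h2, -⟩, rfl⟩ := ht
      subst he
      rw [h1, h2]
    · intro f hf
      refine ⟨(bOf f, J, f), ?_, rfl⟩
      simp only [Finset.coe_filter, hT, List.mem_toFinset, hmem, Set.mem_setOf_eq]
      exact ⟨⟨hJ, trivial, hf⟩, trivial⟩
  have hsum : ((runs init0 (enc C)).map (fun s : St A => ImmS s.2.1)).sum = ∑ s ∈ T, ImmS s.2.1 :=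
    (List.sum_toFinset _ (runs_nodup _)).symm
  rw [hsum]
  rw [finsum_mem_finset_sub _ _ (T.image (fun s => s.2.1))]
  · rw [← Finset.sum_fiberwise_of_maps_to (s := T) (t := T.image (fun s => s.2.1)) (g := fun s => s.2.1)
      (fun s hs => Finset.mem_image_of_mem _ hs)]
    apply Finset.sum_congr rfl
    intro J hJ
    rw [Finset.mem_image] at hJ
    obtain ⟨s, hs, rfl⟩ := hJ
    have hs' := (hmem s).1 (by simpa [hT] using hs)
    rw [hL _ hs'.1]
    rw [Finset.sum_congr rfl (g := fun _ => ImmS s.2.1)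
      (fun t ht => by rw [(Finset.mem_filter.1 ht).2])]
    rw [Finset.sum_const, Nat.cast_smul_eq_nsmul]
  · rintro J ⟨hJ, -⟩ hne
    rw [hL J hJ] at hne
    have : (T.filter (fun s => s.2.1 = J)).card ≠ 0 := by
      intro h; rw [h] at hne; simp at hne
    obtain ⟨s, hs⟩ := Finset.card_pos.1 (Nat.pos_of_ne_zero this)
    rw [Finset.mem_filter] at hs
    exact Finset.mem_image.2 ⟨s, hs.1, hs.2⟩
  · intro J hJ
    rw [Finset.mem_image] at hJ
    obtain ⟨s, hs, rfl⟩ := hJ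
    have hs1 : s ∈ runs init0 (enc C) := by simpa [hT] using hs
    refine ⟨((hmem s).1 hs1).1, ?_⟩
    rw [runs_size _ s hs1, size_eq, ← enc_map_fst, List.length_map]

end Part6
end ColoredImm

namespace ColoredImm

/-- The colored ribbon function expands positively into the colored
immaculate basis: `R_C = Σ_J L_{J,C} 𝔖_J`, summed over all sentences `J` with `|J| = |C|`. -/
theorem statement15 {A : Type*} [Inhabited A] (C : Sentence A) (hC : IsSentence C) :
    Rib C =
      ∑ᶠ J ∈ {J : Sentence A | IsSentence J ∧ size J = size C}, (LJC J C : ℚ) • ImmS J :=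
  main15 C hC

end ColoredImm
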